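/- arXiv:2503.11222 — 2 statements merged into one kernel-verified Lean document; each statement's English description precedes it below -/
import Mathlib

section
/- Let G=(V,w,μ,d) be a finite connected weighted graph with a general path distance, and assume G has non-negative Ollivier curvature. Suppose there exists a vertex x∈V such that κ(x,y)>0 for every y with y∼x. Then the first Betti number satisfies β₁(M₂(G)) = 0. -/
/-!
Let `α` be a nonzero form in `H1set`, scaled so that `|α| ≤ d` on edges with equality somewhere,
and call an oriented edge `a → b` extremal if `α a b = d a b`.

*Geodesics.* The cycles in `X₂` are exactly what is needed to show that the `α`-sum along a path
with at most three edges is also the `α`-sum along some geodesic with the same ends (`walk_two`,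
`walk_three`). Hence around an extremal edge `a → b` the primitives `α a ·` on the ball around `a`
and `d a b + α b ·` on the ball around `b` are `1`-Lipschitz across the two balls, and a pair
`(x, y)` where the bound is attained is joined by a geodesic of extremal edges.

*Curvature.* Two functions that are `1`-Lipschitz across the balls already bound `κ(a, b)` from above
(`kappa_le_bipartite`). As the primitives have vanishing Laplacian at `a` and `b`, every extremal
edge has `κ(a, b) ≤ 0` (`UnitHarmonic.kappa_nonpos`). Since also `κ(a, b) ≥ 0`, the primitives are
minimisers, and perturbing them gives the first-order condition `UnitHarmonic.perturb`.

So it suffices to find an extremal edge leaving the given vertex `x`. This follows from two facts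
on infinite extremal paths.

*They exist* (`UnitHarmonic.not_wellFounded`). Otherwise let `U a` be the largest length of an extremal
path starting at `a`. Perturbing in the direction of `U` gives `ΔU(b) ≤ ΔU(a)` for the first edge
`a → b` of a longest path, and `ΔU ≥ 0` where `U = 0`, so `U` is subharmonic. At a maximum of `U`
all neighbours must then share its value, but the next vertex on a longest path has a smaller one.

*They spread to neighbours* (`UnitHarmonic.not_acc`). By first-order optimality, every `u` in the ball
around `v` is matched along an extremal edge `v → v₁` with some `u₁` in the ball around `v₁`, with
`u₁` reached from `u` by extremal edges. Following an infinite path from `v`, the vertex `u` keeps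
moving, because while it rests the values `α u v` increase strictly, and these are finitely many.
-/

open Finset

namespace Paper

variable {V : Type*}

/-- Adjacency relation of a weighted graph: `x ∼ y` iff `w x y > 0`. -/
def Adj (w : V → V → ℝ) (x y : V) : Prop := 0 < w x y

/-- The axioms of a weighted graph `(V, w, μ)`: `w` symmetric, nonnegative, vanishing on the
diagonal, and `μ` positive. -/
structure IsWeightedGraph (w : V → V → ℝ) (μ : V → ℝ) : Prop where
  symm : ∀ x y, w x y = w y x
  nonneg : ∀ x y, 0 ≤ w x y
  loopless : ∀ x, w x x = 0
  mu_pos : ∀ x, 0 < μ x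

/-- Connectedness of the weighted graph. -/
def GraphConnected (w : V → V → ℝ) : Prop :=
  ∀ x y : V, ∃ (n : ℕ) (c : Fin (n + 1) → V), c 0 = x ∧ c (Fin.last n) = y ∧
    ∀ i : Fin n, Adj w (c i.castSucc) (c i.succ)

/-- `d` is a general path distance for the graph with edge weight `w`:
symmetric, vanishing exactly on the diagonal, nonnegative, and equal to the infimum of the
lengths of paths joining the two points. -/
def IsPathDistance (w : V → V → ℝ) (d : V → V → ℝ) : Prop :=
  (∀ x y, d x y = d y x) ∧ (∀ x y, d x y = 0 ↔ x = y) ∧ (∀ x y, 0 ≤ d x y) ∧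
  ∀ x y : V, IsGLB { s : ℝ |
      ∃ (n : ℕ) (c : Fin (n + 1) → V), c 0 = x ∧ c (Fin.last n) = y ∧
        (∀ i : Fin n, Adj w (c i.castSucc) (c i.succ)) ∧
        s = ∑ i : Fin n, d (c i.castSucc) (c i.succ) } (d x y)

section Finite

variable [Fintype V]

/-- The (negative) graph Laplacian `Δ f (x) = ∑_y (w x y / μ x) (f y - f x)`. -/
noncomputable def lap (w : V → V → ℝ) (μ : V → ℝ) (f : V → ℝ) (x : V) : ℝ :=
  ∑ y, w x y / μ x * (f y - f x)

/-- The gradient `∇_{xy} f = (f x - f y)/d(x,y)`. -/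
noncomputable def grad (d : V → V → ℝ) (f : V → ℝ) (x y : V) : ℝ := (f x - f y) / d x y

/-- The Lipschitz norm `‖∇ f‖_∞ = sup_{x ∼ y} |∇_{xy} f|`. -/
noncomputable def gradNorm (w d : V → V → ℝ) (f : V → ℝ) : ℝ :=
  sSup { r : ℝ | ∃ x y, Adj w x y ∧ r = |grad d f x y| }

/-- The Ollivier curvature `κ(x,y) = inf {∇_{xy} Δ f : ∇_{yx} f = 1, ‖∇ f‖_∞ = 1}`. -/
noncomputable def kappa (w : V → V → ℝ) (μ : V → ℝ) (d : V → V → ℝ) (x y : V) : ℝ :=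
  sInf { r : ℝ | ∃ f : V → ℝ, grad d f y x = 1 ∧ gradNorm w d f = 1 ∧
      r = grad d (lap w μ f) x y }

/-- Non-negative Ollivier curvature on every edge. -/
def NonnegCurv (w : V → V → ℝ) (μ : V → ℝ) (d : V → V → ℝ) : Prop :=
  ∀ x y, Adj w x y → 0 ≤ kappa w μ d x y

/-- A cycle of length `n + 3`: an injective cyclic path along edges. -/
def IsCycle {n : ℕ} (w : V → V → ℝ) (c : ZMod (n + 3) → V) : Prop :=
  Function.Injective c ∧ ∀ i, Adj w (c i) (c (i + 1))

/-- Membership of a cycle in `X₂`: either a triangle, or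
`d(x₀,x₃) < d(x₀,x₁)+d(x₁,x₂)+d(x₂,x₃)` and `x₃ ∼ … ∼ x_{n-1} ∼ x₀` is a geodesic. -/
def InX2 {n : ℕ} (w d : V → V → ℝ) (c : ZMod (n + 3) → V) : Prop :=
  n = 0 ∨
    (d (c 0) (c 3) < d (c 0) (c 1) + d (c 1) (c 2) + d (c 2) (c 3) ∧
      ∑ i ∈ Finset.univ.filter (fun i : ZMod (n + 3) => i ≠ 0 ∧ i ≠ 1 ∧ i ≠ 2),
          d (c i) (c (i + 1)) = d (c 3) (c 0))

/-- The set of harmonic 1-forms `H₁(M₂(G))`: antisymmetric functions supported on edges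
with vanishing cyclic sum along every cycle of `X₂` and vanishing divergence `δ* α`. -/
def H1set (w : V → V → ℝ) (μ : V → ℝ) (d : V → V → ℝ) : Set (V → V → ℝ) :=
  { α | (∀ x y, α x y = -α y x) ∧ (∀ x y, ¬Adj w x y → α x y = 0) ∧
      (∀ (n : ℕ) (c : ZMod (n + 3) → V), IsCycle w c → InX2 w d c →
          ∑ i, α (c i) (c (i + 1)) = 0) ∧
      (∀ x, ∑ y, w x y / μ x * α x y = 0) }

/-- The first Betti number `β₁(M₂(G)) = dim H₁(M₂(G))`. -/
noncomputable def betti1 (w : V → V → ℝ) (μ : V → ℝ) (d : V → V → ℝ) : ℕ :=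
  Module.finrank ℝ (Submodule.span ℝ (H1set w μ d))

/-- The combinatorial vertex degree. -/
noncomputable def deg (w : V → V → ℝ) (x : V) : ℕ := Nat.card { y : V // Adj w x y }

/-- The minimal combinatorial vertex degree. -/
noncomputable def degMin (w : V → V → ℝ) : ℕ := ⨅ x : V, deg w x

/-- The maximal combinatorial vertex degree. -/
noncomputable def degMax (w : V → V → ℝ) : ℕ := ⨆ x : V, deg w x

end Finite

end Paper


namespace Paper

/-! ### Walks and geodesics -/

section Geodesics

variable {V : Type*} {w d α : V → V → ℝ} {μ : V → ℝ}

/-- `Walk w d α a b l s`: there is a walk from `a` to `b` along edges, of `d`-length `l`, along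
which the values of `α` sum to `s`. -/
inductive Walk (w d α : V → V → ℝ) : V → V → ℝ → ℝ → Prop
  | nil (a : V) : Walk w d α a a 0 0
  | cons {a b c : V} {l s : ℝ} : Adj w a b → Walk w d α b c l s →
      Walk w d α a c (d a b + l) (α a b + s)

theorem Walk.append {a b c : V} {l s l' s' : ℝ} (h : Walk w d α a b l s)
    (h' : Walk w d α b c l' s') : Walk w d α a c (l + l') (s + s') := by
  induction h with
  | nil a => simpa using h'
  | cons hab _ ih =>
    have := Walk.cons (d := d) (α := α) hab (ih h')
    simpa only [add_assoc] using this

theorem Walk.edge {a b : V} (h : Adj w a b) : Walk w d α a b (d a b) (α a b) := by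
  simpa using Walk.cons (d := d) (α := α) h (Walk.nil b)

theorem IsWeightedGraph.adj_symm (hG : IsWeightedGraph w μ) {a b : V} (h : Adj w a b) :
    Adj w b a := by
  unfold Adj at *
  rwa [hG.symm b a]

theorem IsWeightedGraph.adj_ne (hG : IsWeightedGraph w μ) {a b : V} (h : Adj w a b) :
    a ≠ b := by
  rintro rfl
  unfold Adj at h
  rw [hG.loopless] at h
  exact lt_irrefl _ h

theorem Walk.reverse (hG : IsWeightedGraph w μ) (hsymm : ∀ a b, d a b = d b a)
    (hα : ∀ a b, α a b = -α b a) {a b : V} {l s : ℝ} (h : Walk w d α a b l s) :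
    Walk w d α b a l (-s) := by
  induction h with
  | nil a => simpa using Walk.nil a
  | @cons a b c l s hab _ ih =>
    have := ih.append (Walk.edge (d := d) (α := α) (hG.adj_symm hab))
    rw [hsymm b a, hα b a] at this
    rwa [add_comm (d a b), neg_add_rev]

theorem Walk.exists_nat {a b : V} {l s : ℝ} (h : Walk w d α a b l s) :
    ∃ (m : ℕ) (p : ℕ → V), p 0 = a ∧ p m = b ∧ (∀ i < m, Adj w (p i) (p (i + 1))) ∧
      ∑ i ∈ range m, d (p i) (p (i + 1)) = l ∧ ∑ i ∈ range m, α (p i) (p (i + 1)) = s := by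
  induction h with
  | nil a => exact ⟨0, fun _ => a, rfl, rfl, by simp, by simp, by simp⟩
  | @cons a b c l s hab _ ih =>
    obtain ⟨m, p, h0, hm, hadj, hl, hs⟩ := ih
    refine ⟨m + 1, fun i => Nat.casesOn i a p, rfl, hm, ?_, ?_, ?_⟩
    · rintro (_ | i) hi
      · simpa [h0] using hab
      · exact hadj i (by omega)
    · rw [sum_range_succ', add_comm]
      simp [h0, hl]
    · rw [sum_range_succ', add_comm]
      simp [h0, hs]

theorem walk_of_fin (n : ℕ) : ∀ (c : Fin (n + 1) → V),
    (∀ i : Fin n, Adj w (c i.castSucc) (c i.succ)) →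
    ∃ s, Walk w d α (c 0) (c (Fin.last n)) (∑ i : Fin n, d (c i.castSucc) (c i.succ)) s := by
  induction n with
  | zero => intro c _; exact ⟨0, by simpa using Walk.nil (c 0)⟩
  | succ n ih =>
    intro c hc
    obtain ⟨s, hs⟩ := ih (fun i => c i.succ) (fun i => by simpa using hc i.succ)
    refine ⟨α (c 0) (c 1) + s, ?_⟩
    have h0 : Adj w (c 0) (c (Fin.succ 0)) := by simpa using hc 0
    rw [Fin.sum_univ_succ]
    simpa using Walk.cons h0 hs

theorem Walk.dist_le (hd : IsPathDistance w d) {a b : V} {l s : ℝ} (h : Walk w d α a b l s) :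
    d a b ≤ l := by
  obtain ⟨m, p, h0, hm, hadj, hl, -⟩ := h.exists_nat
  refine (hd.2.2.2 a b).1 ⟨m, fun i => p i, by simpa using h0, by simpa using hm, ?_, ?_⟩
  · intro i
    simpa using hadj i i.2
  · rw [← hl, ← Fin.sum_univ_eq_sum_range (fun i => d (p i) (p (i + 1)))]
    simp

theorem IsPathDistance.pos (hd : IsPathDistance w d) {a b : V} (h : a ≠ b) : 0 < d a b :=
  lt_of_le_of_ne (hd.2.2.1 a b) fun h' => h ((hd.2.1 a b).1 h'.symm)

theorem IsPathDistance.self (hd : IsPathDistance w d) (a : V) : d a a = 0 := (hd.2.1 a a).2 rfl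

/-- On a finite graph, the infimum over paths is a minimum over the first step. -/
theorem exists_first_step [Finite V] (hconn : GraphConnected w) (hd : IsPathDistance w d)
    {a b : V} (hab : a ≠ b) : ∃ z, Adj w a z ∧ d a z + d z b ≤ d a b := by
  by_contra! hcon
  -- The first step minimising `d a z + d z b` gives a lower bound for all path lengths.
  have key : ∃ z, Adj w a z ∧ ∀ z', Adj w a z' → d a z + d z b ≤ d a z' + d z' b := by
    have hne : ({z | Adj w a z} : Set V).Nonempty := by
      obtain ⟨n, c, h0, hl, hadj⟩ := hconn a b
      cases n with
      | zero => exact absurd (h0.symm.trans hl) hab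
      | succ n => exact ⟨c 1, by simpa [h0] using hadj 0⟩
    exact Set.exists_min_image _ (fun z => d a z + d z b) (Set.toFinite _) hne
  obtain ⟨z, hz, hmin⟩ := key
  refine absurd ((hd.2.2.2 a b).2 ?_) (not_le.2 (hcon z hz))
  rintro _ ⟨n, c, h0, hl, hadj, rfl⟩
  cases n with
  | zero => exact absurd (h0.symm.trans hl) hab
  | succ n =>
    have h1 : Adj w a (c 1) := by simpa [h0] using hadj 0
    refine (hmin _ h1).trans ?_
    rw [Fin.sum_univ_succ]
    have h2 : d (c 1) b ≤ ∑ i : Fin n, d (c i.succ.castSucc) (c i.succ.succ) :=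
      (hd.2.2.2 (c 1) b).1 ⟨n, fun i => c i.succ, by simp, by simpa using hl,
        fun i => by simpa using hadj i.succ, by simp⟩
    simp only [Fin.castSucc_zero, h0, Fin.succ_zero_eq_one]
    linarith

theorem exists_geodesic [Finite V] (hG : IsWeightedGraph w μ) (hconn : GraphConnected w)
    (hd : IsPathDistance w d) (α : V → V → ℝ) (a b : V) : ∃ s, Walk w d α a b (d a b) s := by
  have hwf : WellFounded (fun x y : V => d x b < d y b) :=
    @Finite.wellFounded_of_trans_of_irrefl V _ _
      ⟨fun _ _ _ h h' => lt_trans h h'⟩ ⟨fun _ => lt_irrefl _⟩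
  induction a using hwf.induction with
  | _ a ih =>
    by_cases hab : a = b
    · subst hab
      rw [hd.self]
      exact ⟨0, Walk.nil a⟩
    · obtain ⟨z, hz, hle⟩ := exists_first_step hconn hd hab
      have := hd.pos (hG.adj_ne hz)
      obtain ⟨s, hs⟩ := ih z (by linarith)
      have hw := Walk.cons hz hs
      exact ⟨_, (le_antisymm hle (hw.dist_le hd)) ▸ hw⟩

theorem dist_triangle' [Finite V] (hG : IsWeightedGraph w μ) (hconn : GraphConnected w)
    (hd : IsPathDistance w d) (a b c : V) : d a c ≤ d a b + d b c := by
  obtain ⟨s, hs⟩ := exists_geodesic hG hconn hd (fun _ _ => 0) a b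
  obtain ⟨s', hs'⟩ := exists_geodesic hG hconn hd (fun _ _ => 0) b c
  exact (hs.append hs').dist_le hd

/-- Geodesics as sequences: every stretch of a geodesic is a geodesic, and it is injective. -/
theorem exists_geodesic_nat [Finite V] (hG : IsWeightedGraph w μ) (hconn : GraphConnected w)
    (hd : IsPathDistance w d) (α : V → V → ℝ) (a b : V) :
    ∃ (m : ℕ) (p : ℕ → V), p 0 = a ∧ p m = b ∧ (∀ i < m, Adj w (p i) (p (i + 1))) ∧
      (∀ i j, i ≤ j → j ≤ m → ∑ k ∈ Ico i j, d (p k) (p (k + 1)) = d (p i) (p j)) ∧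
      (∀ i j, i < j → j ≤ m → p i ≠ p j) ∧
      (∀ i ≤ m, d a b = d a (p i) + d (p i) b) ∧
      Walk w d α a b (d a b) (∑ i ∈ range m, α (p i) (p (i + 1))) := by
  obtain ⟨s, hs⟩ := exists_geodesic hG hconn hd α a b
  obtain ⟨m, p, h0, hm, hadj, hl, hs'⟩ := hs.exists_nat
  have htri := dist_triangle' hG hconn hd
  have hle : ∀ i j, i ≤ j → d (p i) (p j) ≤ ∑ k ∈ Ico i j, d (p k) (p (k + 1)) := by
    intro i j hij
    induction j, hij using Nat.le_induction with
    | base => simp [hd.self]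
    | succ j hij ih =>
      rw [sum_Ico_succ_top hij]
      linarith [htri (p i) (p j) (p (j + 1))]
  have hgeo : ∀ i j, i ≤ j → j ≤ m →
      ∑ k ∈ Ico i j, d (p k) (p (k + 1)) = d (p i) (p j) := by
    intro i j hij hjm
    have e1 := sum_Ico_consecutive (fun k => d (p k) (p (k + 1))) (Nat.zero_le i) (hij.trans hjm)
    have e2 := sum_Ico_consecutive (fun k => d (p k) (p (k + 1))) hij hjm
    rw [range_eq_Ico] at hl
    have i1 := hle 0 i (Nat.zero_le i)
    have i2 := hle i j hij
    have i3 := hle j m hjm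
    have t1 := htri (p 0) (p i) (p m)
    have t2 := htri (p i) (p j) (p m)
    rw [h0, hm] at *
    linarith
  refine ⟨m, p, h0, hm, hadj, hgeo, ?_, ?_, hs' ▸ hs⟩
  · intro i j hij hjm heq
    have e := hgeo i j hij.le hjm
    rw [heq, hd.self, sum_eq_sum_Ico_succ_bot hij] at e
    have h1 := hd.pos (hG.adj_ne (hadj i (by omega)))
    have h2 : 0 ≤ ∑ k ∈ Ico (i + 1) j, d (p k) (p (k + 1)) :=
      sum_nonneg fun k _ => hd.2.2.1 _ _
    linarith
  · intro i hi
    have e1 := sum_Ico_consecutive (fun k => d (p k) (p (k + 1))) (Nat.zero_le i) hi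
    rw [hgeo 0 i (Nat.zero_le i) hi, hgeo i m hi le_rfl, hgeo 0 m (Nat.zero_le m) le_rfl, h0,
      hm] at e1
    exact e1.symm

end Geodesics

/-! ### Short paths and cycles in `X₂` -/

section Cycles

variable {V : Type*} {w d α : V → V → ℝ} {μ : V → ℝ}

/-- `α` sums to zero along every cycle in `X₂`. -/
def ClosedOnX2 (w d α : V → V → ℝ) : Prop :=
  ∀ (n : ℕ) (c : ZMod (n + 3) → V), IsCycle w c → InX2 w d c → ∑ i, α (c i) (c (i + 1)) = 0

/-- Cycles in `X₂` presented as closed sequences indexed by `ℕ`. -/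
theorem ClosedOnX2.sum_nat (h : ClosedOnX2 w d α) (n : ℕ) (q : ℕ → V) (hq : q (n + 3) = q 0)
    (hinj : ∀ i j, i < j → j < n + 3 → q i ≠ q j)
    (hadj : ∀ i < n + 3, Adj w (q i) (q (i + 1)))
    (hX : n = 0 ∨ (d (q 0) (q 3) < d (q 0) (q 1) + d (q 1) (q 2) + d (q 2) (q 3) ∧
      ∑ i ∈ Ico 3 (n + 3), d (q i) (q (i + 1)) = d (q 3) (q 0))) :
    ∑ i ∈ range (n + 3), α (q i) (q (i + 1)) = 0 := by
  let c : ZMod (n + 3) → V := fun i => q (ZMod.val i)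
  have hlt : ∀ i : ZMod (n + 3), i.val < n + 3 := fun i => ZMod.val_lt i
  have hsucc : ∀ i, c (i + 1) = q (i.val + 1) := by
    intro i
    change q (ZMod.val (i + 1)) = _
    have h1 : (1 : ZMod (n + 3)).val = 1 := ZMod.val_one'' (by omega)
    by_cases hi : i.val + 1 = n + 3
    · rw [ZMod.val_add, h1, hi, Nat.mod_self, hq]
    · rw [ZMod.val_add, h1, Nat.mod_eq_of_lt (by have := hlt i; omega)]
  have hsum : ∀ F : ℕ → ℝ, ∑ i : ZMod (n + 3), F i.val = ∑ i ∈ range (n + 3), F i := fun F =>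
    Fin.sum_univ_eq_sum_range F (n + 3)
  have := h n c ?_ ?_
  · rw [← hsum (fun i => α (q i) (q (i + 1)))]
    rw [← this]
    exact sum_congr rfl fun i _ => by rw [hsucc]
  · refine ⟨fun i j hij => ?_, fun i => ?_⟩
    · by_contra hne
      have hne' : i.val ≠ j.val := fun h => hne (ZMod.val_injective _ h)
      rcases lt_or_gt_of_ne hne' with hl | hl
      · exact hinj _ _ hl (hlt j) hij
      · exact hinj _ _ hl (hlt i) hij.symm
    · rw [hsucc]
      exact hadj _ (hlt i)
  · rcases hX with h0 | ⟨h1, h2⟩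
    · exact Or.inl h0
    · by_cases hn : n = 0
      · exact Or.inl hn
      have v0 : (0 : ZMod (n + 3)).val = 0 := ZMod.val_zero
      have v1 : (1 : ZMod (n + 3)).val = 1 := ZMod.val_one'' (by omega)
      have v2 : (2 : ZMod (n + 3)).val = 2 := by
        have := ZMod.val_natCast_of_lt (n := n + 3) (a := 2) (by omega)
        simpa using this
      have v3 : (3 : ZMod (n + 3)).val = 3 := by
        have := ZMod.val_natCast_of_lt (n := n + 3) (a := 3) (by omega)
        simpa using this
      refine Or.inr ⟨?_, ?_⟩
      · simpa only [c, v0, v1, v2, v3] using h1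
      · simp only [hsucc]
        have e0 : ∀ i : ZMod (n + 3), (i ≠ 0 ∧ i ≠ 1 ∧ i ≠ 2) ↔ 3 ≤ i.val := by
          intro i
          have a0 : i = 0 ↔ i.val = 0 := by
            rw [← v0]; exact (ZMod.val_injective _).eq_iff.symm
          have a1 : i = 1 ↔ i.val = 1 := by
            rw [← v1]; exact ((ZMod.val_injective _).eq_iff.symm).trans (by rw [v1])
          have a2 : i = 2 ↔ i.val = 2 := by
            rw [← v2]; exact ((ZMod.val_injective _).eq_iff.symm).trans (by rw [v2])
          rw [ne_eq, ne_eq, ne_eq, a0, a1, a2]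
          omega
        simp only [c, e0, v0, v3]
        rw [← h2, sum_filter, hsum (fun i => if 3 ≤ i then d (q i) (q (i + 1)) else 0),
          ← sum_filter]
        refine sum_congr ?_ fun _ _ => rfl
        ext i
        simp only [mem_filter, mem_range, mem_Ico]
        omega

/-- The `α`-sum along a path with two edges is also the `α`-sum along a geodesic joining its
ends. -/
theorem walk_two [Finite V] (hG : IsWeightedGraph w μ) (hconn : GraphConnected w)
    (hd : IsPathDistance w d) (hα : ∀ a b, α a b = -α b a) (hX : ClosedOnX2 w d α)
    {a b c : V} (hab : Adj w a b) (hbc : Adj w b c) :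
    Walk w d α a c (d a c) (α a b + α b c) := by
  have htri := dist_triangle' hG hconn hd
  by_cases hac : a = c
  · subst hac
    rw [hd.self, hα a b, neg_add_cancel]
    exact Walk.nil a
  rcases (htri a b c).eq_or_lt with heq | hlt
  · rw [heq]
    exact (Walk.edge hab).append (Walk.edge hbc)
  obtain ⟨m, p, h0, hm, hadj, hgeo, hinj, hthru, hwalk⟩ := exists_geodesic_nat hG hconn hd α c a
  have hb : ∀ i ≤ m, p i ≠ b := by
    intro i hi hb
    have := hthru i hi
    rw [hb, hd.1 c a, hd.1 c b, hd.1 b a] at this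
    linarith
  cases m with
  | zero => exact absurd (hm.symm.trans h0) hac
  | succ n =>
    -- The closed sequence is `a, b` followed by the geodesic from `c` back to `a = p (n + 1)`.
    have key := hX.sum_nat n (fun i => match i with | 0 => a | 1 => b | i + 2 => p i) hm ?_ ?_ ?_
    · rw [sum_range_succ', sum_range_succ'] at key
      simp only [h0] at key
      have := hwalk.reverse hG hd.1 hα
      rw [hd.1 c a] at this
      convert this using 1
      linarith
    · rintro (_ | _ | i) (_ | _ | j) hij hj <;> try omega
      · exact hG.adj_ne hab
      · intro h
        exact hinj j (n + 1) (by omega) le_rfl (h.symm.trans hm.symm)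
      · exact fun h => hb j (by omega) h.symm
      · exact hinj i j (by omega) (by omega)
    · rintro (_ | _ | i) hi
      · exact hab
      · simpa [h0] using hbc
      · exact hadj i (by omega)
    · rcases Nat.eq_zero_or_pos n with hn | hn
      · exact Or.inl hn
      refine Or.inr ⟨?_, ?_⟩
      · have e := hthru 1 (by omega)
        have := hd.2.2.1 (p 0) (p 1)
        rw [hd.1 c a] at e
        change d a (p 1) < d a b + d b (p 0) + d (p 0) (p 1)
        rw [hd.1 (p 1) a] at e
        rw [h0] at *
        linarith
      · have e := hgeo 1 (n + 1) (by omega) le_rfl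
        rw [hm] at e
        change _ = d (p 1) a
        rw [← e, sum_Ico_eq_sum_range, sum_Ico_eq_sum_range]
        refine sum_congr (by congr 1) fun i _ => ?_
        rw [show 3 + i = (1 + i) + 2 by omega]

/-- The same for paths with three edges; this is what the definition of `X₂` is made for. -/
theorem walk_three [Finite V] (hG : IsWeightedGraph w μ) (hconn : GraphConnected w)
    (hd : IsPathDistance w d) (hα : ∀ a b, α a b = -α b a) (hX : ClosedOnX2 w d α)
    {a b c e : V} (hab : Adj w a b) (hbc : Adj w b c) (hce : Adj w c e) :
    Walk w d α a e (d a e) (α a b + α b c + α c e) := by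
  have htri := dist_triangle' hG hconn hd
  rcases (htri a b e).eq_or_lt with heq | hlt₁
  · rw [heq, add_assoc]
    exact Walk.cons hab (walk_two hG hconn hd hα hX hbc hce)
  rcases (htri a c e).eq_or_lt with heq | hlt₂
  · rw [heq]
    exact (walk_two hG hconn hd hα hX hab hbc).append (Walk.edge hce)
  have hac : a ≠ c := by
    rintro rfl
    simp [hd.self] at hlt₂
  have hbe : b ≠ e := by
    rintro rfl
    simp [hd.self] at hlt₁
  obtain ⟨m, p, h0, hm, hadj, hgeo, hinj, hthru, hwalk⟩ := exists_geodesic_nat hG hconn hd α e a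
  have hb : ∀ i ≤ m, p i ≠ b := by
    intro i hi hb
    have := hthru i hi
    rw [hb, hd.1 e a, hd.1 e b, hd.1 b a] at this
    linarith
  have hc : ∀ i ≤ m, p i ≠ c := by
    intro i hi hc
    have := hthru i hi
    rw [hc, hd.1 e a, hd.1 e c, hd.1 c a] at this
    linarith
  -- For `m = 0` the ends agree and the closed sequence below is a triangle.
  have key := hX.sum_nat m
    (fun i => match i with | 0 => a | 1 => b | 2 => c | i + 3 => p i) hm ?_ ?_ ?_
  · rw [sum_range_succ', sum_range_succ', sum_range_succ'] at key
    simp only [h0] at key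
    have := hwalk.reverse hG hd.1 hα
    rw [hd.1 e a] at this
    convert this using 1
    linarith
  · rintro (_ | _ | _ | i) (_ | _ | _ | j) hij hj <;> first | omega | exact hac | skip
    · exact hG.adj_ne hab
    · intro h
      exact hinj j m (by omega) le_rfl (h.symm.trans hm.symm)
    · exact hG.adj_ne hbc
    · exact fun h => hb j (by omega) h.symm
    · exact fun h => hc j (by omega) h.symm
    · exact hinj i j (by omega) (by omega)
  · rintro (_ | _ | _ | i) hi
    · exact hab
    · exact hbc
    · simpa [h0] using hce
    · exact hadj i (by omega)
  · refine Or.inr ⟨?_, ?_⟩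
    · change d a (p 0) < d a b + d b c + d c (p 0)
      rw [h0]
      linarith [htri a b c]
    · have e1 := hgeo 0 m (by omega) le_rfl
      rw [hm] at e1
      change _ = d (p 0) a
      rw [← e1, sum_Ico_eq_sum_range, sum_Ico_eq_sum_range]
      refine sum_congr (by congr 1) fun i _ => ?_
      rw [show 3 + i = (0 + i) + 3 by omega]

end Cycles

/-! ### Upper bounds for the Ollivier curvature -/

section Curvature

variable {V : Type*} [Fintype V] {w d α : V → V → ℝ} {μ : V → ℝ}

/-- `Ball w a b`: the vertex `b` lies in the closed combinatorial unit ball around `a`. -/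
def Ball (w : V → V → ℝ) (a b : V) : Prop := b = a ∨ Adj w a b

theorem lap_le_lap (hG : IsWeightedGraph w μ) {f g : V → ℝ} {a : V} (ha : f a = g a)
    (h : ∀ b, Adj w a b → f b ≤ g b) : lap w μ f a ≤ lap w μ g a := by
  refine sum_le_sum fun b _ => ?_
  rcases (hG.nonneg a b).eq_or_lt with h0 | h0
  · simp [← h0]
  · have := h b h0
    have := div_pos h0 (hG.mu_pos a)
    gcongr
    exact ha.ge

theorem lap_add_smul (f g : V → ℝ) (t : ℝ) (a : V) :
    lap w μ (fun b => f b + t * g b) a = lap w μ f a + t * lap w μ g a := by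
  simp only [lap, mul_sum, ← sum_add_distrib]
  exact sum_congr rfl fun b _ => by ring

theorem lip_of_gradNorm (hG : IsWeightedGraph w μ) (hd : IsPathDistance w d) {f : V → ℝ}
    (hf : gradNorm w d f = 1) {a b : V} (hab : Adj w a b) : |f a - f b| ≤ d a b := by
  have hfin : { r : ℝ | ∃ x y, Adj w x y ∧ r = |grad d f x y| }.Finite := by
    refine (Set.finite_range (fun z : V × V => |grad d f z.1 z.2|)).subset ?_
    rintro _ ⟨x, y, -, rfl⟩
    exact ⟨(x, y), rfl⟩
  have h1 : |grad d f a b| ≤ 1 := hf ▸ le_csSup hfin.bddAbove ⟨a, b, hab, rfl⟩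
  have hpos := hd.pos (hG.adj_ne hab)
  rwa [grad, abs_div, abs_of_pos hpos, div_le_one hpos] at h1

theorem kappa_le (hG : IsWeightedGraph w μ) (hd : IsPathDistance w d) {a b : V}
    (hab : Adj w a b) {g : V → ℝ} (hlip : ∀ u v, g u - g v ≤ d u v)
    (hg : g b - g a = d a b) :
    kappa w μ d a b * d a b ≤ lap w μ g a - lap w μ g b := by
  have hpos := hd.pos (hG.adj_ne hab)
  rw [← le_div_iff₀ hpos]
  refine csInf_le ?_ ⟨g, ?_, ?_, rfl⟩
  · refine ⟨(-(∑ y, w a y / μ a * d a y) - ∑ y, w b y / μ b * d b y) / d a b, ?_⟩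
    rintro _ ⟨f, -, hf, rfl⟩
    have bound : ∀ v, |lap w μ f v| ≤ ∑ y, w v y / μ v * d v y := by
      intro v
      refine (abs_sum_le_sum_abs _ _).trans (sum_le_sum fun y _ => ?_)
      have h0 : 0 ≤ w v y / μ v := div_nonneg (hG.nonneg v y) (hG.mu_pos v).le
      rw [abs_mul, abs_of_nonneg h0]
      rcases (hG.nonneg v y).eq_or_lt with h | h
      · simp [← h]
      · rw [abs_sub_comm]
        exact mul_le_mul_of_nonneg_left (lip_of_gradNorm hG hd hf h) h0
    have h1 := abs_le.1 (bound a)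
    have h2 := abs_le.1 (bound b)
    rw [grad]
    exact div_le_div_of_nonneg_right (by linarith [h1.1, h2.2]) hpos.le
  · rw [grad, hd.1 b a, hg, div_self hpos.ne']
  · refine IsGreatest.csSup_eq ⟨⟨b, a, hG.adj_symm hab, ?_⟩, ?_⟩
    · rw [grad, hd.1 b a, hg, div_self hpos.ne', abs_one]
    · rintro _ ⟨u, v, huv, rfl⟩
      have hp := hd.pos (hG.adj_ne huv)
      rw [grad, abs_div, abs_of_pos hp, div_le_one hp, abs_le]
      have := hlip v u
      rw [hd.1 v u] at this
      exact ⟨by linarith, hlip u v⟩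

/-- Bipartite form of the curvature bound: it suffices to have one function around each end of
the edge, `1`-Lipschitz across the two balls only. The function
`g z = min (f₁ x' + d x' z)` over the first ball is `1`-Lipschitz, lies below `f₁` on the first ball
and above `f₂` on the second. -/
theorem kappa_le_bipartite (hG : IsWeightedGraph w μ) (hconn : GraphConnected w)
    (hd : IsPathDistance w d) {a b : V} (hab : Adj w a b) {f₁ f₂ : V → ℝ}
    (hlip : ∀ x y, Ball w a x → Ball w b y → f₂ y - f₁ x ≤ d x y)
    (hf : f₂ b - f₁ a = d a b) :
    kappa w μ d a b * d a b ≤ lap w μ f₁ a - lap w μ f₂ b := by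
  classical
  have htri := dist_triangle' hG hconn hd
  let S : Finset V := univ.filter fun x => Ball w a x
  have hS : S.Nonempty := ⟨a, mem_filter.2 ⟨mem_univ a, Or.inl rfl⟩⟩
  let g : V → ℝ := fun z => S.inf' hS fun x => f₁ x + d x z
  have hg : ∀ x z, Ball w a x → g z ≤ f₁ x + d x z := fun x z hx =>
    inf'_le (fun x => f₁ x + d x z) (by simpa [S] using hx)
  have hg' : ∀ z, ∃ x, Ball w a x ∧ g z = f₁ x + d x z := by
    intro z
    obtain ⟨x, hx, he⟩ := exists_mem_eq_inf' hS fun x => f₁ x + d x z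
    exact ⟨x, by simpa [S] using hx, he⟩
  have glip : ∀ u v, g u - g v ≤ d u v := by
    intro u v
    obtain ⟨x, hx, he⟩ := hg' v
    have h1 := hg x u hx
    have h2 := htri x v u
    rw [hd.1 v u] at h2
    linarith
  have g1 : ∀ x, Ball w a x → g x ≤ f₁ x := by
    intro x hx
    have := hg x x hx
    rwa [hd.self, add_zero] at this
  have g2 : ∀ y, Ball w b y → f₂ y ≤ g y := by
    intro y hy
    obtain ⟨x, hx, he⟩ := hg' y
    have := hlip x y hx hy
    linarith
  have ga := g1 a (Or.inl rfl)
  have gb := g2 b (Or.inl rfl)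
  have gba := glip b a
  rw [hd.1 b a] at gba
  have h1 := lap_le_lap (μ := μ) hG (f := g) (g := f₁) (a := a) (by linarith)
    fun x hx => g1 x (Or.inr hx)
  have h2 := lap_le_lap (μ := μ) hG (f := f₂) (g := g) (a := b) (by linarith)
    fun x hx => g2 x (Or.inr hx)
  have h3 := kappa_le (μ := μ) hG hd hab glip (by linarith)
  linarith

/-- A perturbation that does not violate the tight ones among finitely many inequalities is
admissible for small times. -/
theorem exists_small {ι : Type*} [Finite ι] (g e : ι → ℝ)
    (h : ∀ i, 0 ≤ g i ∧ (g i = 0 → e i ≤ 0)) : ∃ t > 0, ∀ i, t * e i ≤ g i := by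
  have : ∀ᶠ t in nhdsWithin (0 : ℝ) (Set.Ioi 0), ∀ i, t * e i ≤ g i := by
    rw [Filter.eventually_all]
    intro i
    rcases (h i).1.eq_or_lt with h0 | h0
    · filter_upwards [self_mem_nhdsWithin] with t ht
      rw [← h0]
      exact mul_nonpos_of_nonneg_of_nonpos (le_of_lt ht) ((h i).2 h0.symm)
    · have hc : Filter.Tendsto (fun t : ℝ => t * e i) (nhdsWithin 0 (Set.Ioi 0))
          (nhds (0 * e i)) :=
        ((continuous_id.mul continuous_const).tendsto 0).mono_left nhdsWithin_le_nhds
      rw [zero_mul] at hc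
      filter_upwards [hc.eventually_lt_const h0] with t ht using ht.le
  obtain ⟨t, h1, h2⟩ := (this.and self_mem_nhdsWithin).exists
  exact ⟨t, h2, h1⟩

end Curvature

/-! ### Extremal edges of harmonic forms -/

section Harmonic

variable {V : Type*} {w d α : V → V → ℝ} {μ : V → ℝ}

/-- The oriented edges on which a form with `‖α‖_∞ ≤ 1` attains the value `1`. -/
def Extremal (w d α : V → V → ℝ) (a b : V) : Prop := Adj w a b ∧ α a b = d a b

/-- If `α ≤ d` on edges and the `α`-sum of a walk equals its length, all its edges are extremal. The
second conclusion records its length, measured by any `U` decreasing by at least `d` along extremal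
edges. -/
theorem Walk.extremal (hle : ∀ a b, Adj w a b → α a b ≤ d a b) {a b : V} {l s : ℝ}
    (h : Walk w d α a b l s) : s ≤ l ∧ (s = l →
      Relation.ReflTransGen (Extremal w d α) a b ∧
      ∀ U : V → ℝ, (∀ u v, Extremal w d α u v → d u v + U v ≤ U u) → l + U b ≤ U a) := by
  induction h with
  | nil a => exact ⟨le_rfl, fun _ => ⟨.refl, fun U _ => by simp⟩⟩
  | @cons a b c l s hab _ ih =>
    have h1 := hle a b hab
    refine ⟨by linarith [ih.1], fun he => ?_⟩
    have hE : Extremal w d α a b := ⟨hab, by linarith [ih.1]⟩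
    obtain ⟨r, hU⟩ := ih.2 (by linarith [ih.1])
    refine ⟨.head hE r, fun U h => ?_⟩
    have := hU U h
    have := h a b hE
    linarith

variable [Fintype V]

/-- A harmonic `1`-form with `‖α‖_∞ ≤ 1`. By antisymmetry the upper bound on oriented edges
controls `|α|`. -/
structure UnitHarmonic (w : V → V → ℝ) (μ : V → ℝ) (d α : V → V → ℝ) : Prop where
  mem : α ∈ H1set w μ d
  le : ∀ a b, Adj w a b → α a b ≤ d a b

/-- The local primitives `α a ·` and `d a b + α b ·` of `α` around the ends of an extremal edge:
their difference across the two balls is the `α`-sum along a geodesic. -/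
theorem UnitHarmonic.walk (hα : UnitHarmonic w μ d α) (hG : IsWeightedGraph w μ)
    (hconn : GraphConnected w) (hd : IsPathDistance w d) {a b : V} (hab : Extremal w d α a b)
    {x y : V} (hx : Ball w a x) (hy : Ball w b y) :
    Walk w d α x y (d x y) (d a b + α b y - α a x) := by
  obtain ⟨hs, -, hX, -⟩ := hα.mem
  have hself : ∀ v, α v v = 0 := fun v => by linarith [hs v v]
  rw [← hab.2]
  rcases hx with rfl | hx <;> rcases hy with rfl | hy
  · simpa [hself] using Walk.edge hab.1
  · simpa [hself] using walk_two hG hconn hd hs hX hab.1 hy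
  · have := walk_two hG hconn hd hs hX (hG.adj_symm hx) hab.1
    convert this using 1
    rw [hself, hs x a]
    ring
  · have := walk_three hG hconn hd hs hX (hG.adj_symm hx) hab.1 hy
    convert this using 1
    rw [hs x a]
    ring

theorem UnitHarmonic.lap_eq_zero (hα : UnitHarmonic w μ d α) (a : V) (r : ℝ) :
    lap w μ (fun y => r + α a y) a = 0 := by
  obtain ⟨hs, -, -, h0⟩ := hα.mem
  have hself : α a a = 0 := by linarith [hs a a]
  rw [← h0 a]
  simp [lap, hself]

theorem UnitHarmonic.kappa_nonpos (hα : UnitHarmonic w μ d α) (hG : IsWeightedGraph w μ)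
    (hconn : GraphConnected w) (hd : IsPathDistance w d) {a b : V} (hab : Extremal w d α a b) :
    kappa w μ d a b ≤ 0 := by
  have hself : ∀ v, α v v = 0 := fun v => by linarith [hα.mem.1 v v]
  have h := kappa_le_bipartite (μ := μ) hG hconn hd hab.1 (f₁ := fun y => 0 + α a y)
    (f₂ := fun y => d a b + α b y)
    (fun x y hx hy => by
      have := ((hα.walk hG hconn hd hab hx hy).extremal hα.le).1
      linarith) (by simp [hself])
  rw [hα.lap_eq_zero, hα.lap_eq_zero] at h
  have := hd.pos (hG.adj_ne hab.1)
  by_contra! hcon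
  nlinarith

/-- First-order optimality: around an extremal edge the local primitives of `α` minimise the
difference of Laplacians, so no admissible direction `(e₁, e₂)` decreases it. -/
theorem UnitHarmonic.perturb (hα : UnitHarmonic w μ d α) (hG : IsWeightedGraph w μ)
    (hconn : GraphConnected w) (hd : IsPathDistance w d) (hcurv : NonnegCurv w μ d)
    {a b : V} (hab : Extremal w d α a b) (e₁ e₂ : V → ℝ)
    (he : ∀ x y, Ball w a x → Ball w b y → d a b + α b y - α a x = d x y → e₂ y ≤ e₁ x)
    (heq : e₂ b = e₁ a) : lap w μ e₂ b ≤ lap w μ e₁ a := by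
  have hself : ∀ v, α v v = 0 := fun v => by linarith [hα.mem.1 v v]
  obtain ⟨t, ht, hsmall⟩ := exists_small
    (fun z : {z : V × V // Ball w a z.1 ∧ Ball w b z.2} =>
      d z.1.1 z.1.2 - (d a b + α b z.1.2 - α a z.1.1))
    (fun z => e₂ z.1.2 - e₁ z.1.1) (by
      rintro ⟨⟨x, y⟩, hx, hy⟩
      refine ⟨?_, fun h => ?_⟩
      · have := ((hα.walk hG hconn hd hab hx hy).extremal hα.le).1
        simpa using this
      · have := he x y hx hy (by simp only at h; linarith)
        simpa using this)
  have h := kappa_le_bipartite (μ := μ) hG hconn hd hab.1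
    (f₁ := fun y => (0 + α a y) + t * e₁ y) (f₂ := fun y => (d a b + α b y) + t * e₂ y)
    (fun x y hx hy => by
      have := hsmall ⟨(x, y), hx, hy⟩
      simp only at this
      linarith) (by simp [hself, heq])
  rw [lap_add_smul, lap_add_smul, hα.lap_eq_zero, hα.lap_eq_zero] at h
  have h0 := mul_nonneg (hcurv a b hab.1) (hd.2.2.1 a b)
  by_contra! hcon
  nlinarith

/-- Every vertex of the ball around `a` forms a tight pair with some vertex of the ball around
`b`. -/
theorem UnitHarmonic.exists_match (hα : UnitHarmonic w μ d α) (hG : IsWeightedGraph w μ)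
    (hconn : GraphConnected w) (hd : IsPathDistance w d) (hcurv : NonnegCurv w μ d)
    {a b : V} (hab : Extremal w d α a b) {x : V} (hx : Ball w a x) :
    ∃ y, Ball w b y ∧ d a b + α b y - α a x = d x y := by
  classical
  have hself : ∀ v, α v v = 0 := fun v => by linarith [hα.mem.1 v v]
  by_contra! hcon
  have hxa : x ≠ a := by
    rintro rfl
    exact hcon b (Or.inl rfl) (by simp [hself])
  have hadj : Adj w a x := hx.resolve_left hxa
  -- Without a tight partner, lowering the first primitive at `x` would be admissible.
  have h := hα.perturb hG hconn hd hcurv hab (fun u => if u = x then -1 else 0) (fun _ => 0)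
    (fun u y _ hy hu => by
      by_cases hux : u = x
      · subst hux
        exact absurd hu (hcon y hy)
      · simp [hux]) (by simp [hxa.symm])
  have hp : 0 < w a x / μ a := div_pos hadj (hG.mu_pos a)
  simp only [lap, hxa.symm, if_false, sub_zero, mul_zero, sum_const_zero, mul_ite, mul_neg,
    mul_one, sum_ite_eq', mem_univ, if_true] at h
  linarith

/-- If an infinite extremal path starts at `v`, one starts at each neighbour `u`. Accessibility of
`u` for the reversed extremal relation is excluded by induction: an extremal edge `v → v₁` moves `u`
forward along extremal edges, or `α u ·` increases strictly from `v` to `v₁`. -/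
theorem UnitHarmonic.not_acc (hα : UnitHarmonic w μ d α) (hG : IsWeightedGraph w μ)
    (hconn : GraphConnected w) (hd : IsPathDistance w d) (hcurv : NonnegCurv w μ d)
    {u v : V} (huv : Ball w v u) (hv : ¬Acc (fun y x => Extremal w d α x y) v) :
    ¬Acc (fun y x => Extremal w d α x y) u := by
  intro hu
  replace hu := hu.transGen
  induction hu generalizing v with
  | intro u _ ih =>
    obtain ⟨v, ⟨hvu, hv⟩, hmax⟩ := Set.exists_max_image
      {v | Ball w v u ∧ ¬Acc (fun y x => Extremal w d α x y) v} (fun v => α u v)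
      (Set.toFinite _) ⟨v, huv, hv⟩
    obtain ⟨v₁, hE, hv₁⟩ : ∃ v₁, Extremal w d α v v₁ ∧
        ¬Acc (fun y x => Extremal w d α x y) v₁ := by
      by_contra! hcon
      exact hv ⟨v, fun y hy => hcon y hy⟩
    obtain ⟨u₁, hu₁, htight⟩ := hα.exists_match hG hconn hd hcurv hE hvu
    by_cases hne : u₁ = u
    · subst hne
      have h1 := hmax v₁ ⟨hu₁, hv₁⟩
      have h2 := hd.pos (hG.adj_ne hE.1)
      -- Tightness of the pair `(u, u)` says `α u v₁ = α u v + d v v₁`.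
      rw [hd.self] at htight
      have := hα.mem.1 u₁ v
      have := hα.mem.1 u₁ v₁
      linarith
    · have hr := (((hα.walk hG hconn hd hE hvu hu₁).extremal hα.le).2 htight).1
      refine ih u₁ ?_ hu₁ hv₁
      rcases Relation.reflTransGen_iff_eq_or_transGen.1 hr with h | h
      · exact absurd h hne
      · exact Relation.transGen_swap.2 h

/-- The largest length of an extremal path starting at a given vertex. -/
theorem exists_height (hd : IsPathDistance w d)
    (hwf : WellFounded fun y x => Extremal w d α x y) :
    ∃ U : V → ℝ, (∀ a, 0 ≤ U a) ∧ (∀ a b, Extremal w d α a b → d a b + U b ≤ U a) ∧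
      ∀ a, U a = 0 ∨ ∃ b, Extremal w d α a b ∧ U a = d a b + U b := by
  -- At a vertex without extremal out-edges the supremum is over the empty set, hence `0`.
  let U : V → ℝ := hwf.fix fun a rec =>
    ⨆ b : {b // Extremal w d α a b}, (d a b.1 + rec b.1 b.2)
  have hU : ∀ a, U a = ⨆ b : {b // Extremal w d α a b}, (d a b.1 + U b.1) := fun a =>
    hwf.fix_eq _ a
  refine ⟨U, fun a => ?_, fun a b hab => ?_, fun a => ?_⟩
  · induction a using hwf.induction with
    | _ a ih =>
      rw [hU]
      exact Real.iSup_nonneg fun b => add_nonneg (hd.2.2.1 _ _) (ih b.1 b.2)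
  · rw [hU a]
    exact le_ciSup (f := fun b : {b // Extremal w d α a b} => d a b.1 + U b.1)
      (Set.finite_range _).bddAbove ⟨b, hab⟩
  · rcases isEmpty_or_nonempty {b // Extremal w d α a b} with h | h
    · left
      rw [hU, Real.iSup_of_isEmpty]
    · right
      obtain ⟨b, hb⟩ := exists_eq_ciSup_of_finite
        (f := fun b : {b // Extremal w d α a b} => d a b.1 + U b.1)
      exact ⟨b.1, b.2, (hU a).trans hb.symm⟩

/-- Extremal paths cannot all terminate: otherwise the largest length `U` of an extremal path from
a vertex is subharmonic, which fails at a maximum of `U`. -/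
theorem UnitHarmonic.not_wellFounded (hα : UnitHarmonic w μ d α) (hG : IsWeightedGraph w μ)
    (hconn : GraphConnected w) (hd : IsPathDistance w d) (hcurv : NonnegCurv w μ d)
    {a b : V} (hab : Extremal w d α a b) :
    ¬WellFounded fun y x => Extremal w d α x y := by
  intro hwf
  obtain ⟨U, h0, hle, heq⟩ := exists_height hd hwf
  have hself : ∀ v, α v v = 0 := fun v => by linarith [hα.mem.1 v v]
  have hsub : ∀ a, 0 ≤ lap w μ U a := by
    intro a
    induction a using hwf.induction with
    | _ a ih =>
      rcases heq a with ha | ⟨b, hE, hb⟩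
      · exact sum_nonneg fun y _ => mul_nonneg (div_nonneg (hG.nonneg a y) (hG.mu_pos a).le)
          (by linarith [h0 y])
      · have h := hα.perturb hG hconn hd hcurv hE (fun y => (0 + α a y) + 1 * U y)
          (fun y => (d a b + α b y) + 1 * U y)
          (fun x y hx hy hxy => by
            have := (((hα.walk hG hconn hd hE hx hy).extremal hα.le).2 hxy).2 U hle
            linarith) (by simp [hself, hb])
        rw [lap_add_smul, lap_add_smul, hα.lap_eq_zero, hα.lap_eq_zero] at h
        linarith [ih b hE]
  obtain ⟨m, -, hm⟩ := Set.exists_max_image Set.univ U Set.finite_univ ⟨a, trivial⟩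
  have hpos : U m ≠ 0 := by
    have := hle a b hab
    have := hd.pos (hG.adj_ne hab.1)
    have := h0 b
    have := hm a trivial
    linarith
  obtain ⟨c, hE, hc⟩ := (heq m).resolve_left hpos
  have hlt : lap w μ U m < 0 := by
    refine sum_neg' (fun y _ => ?_) ⟨c, mem_univ c, ?_⟩
    · exact mul_nonpos_of_nonneg_of_nonpos (div_nonneg (hG.nonneg m y) (hG.mu_pos m).le)
        (by linarith [hm y trivial])
    · exact mul_neg_of_pos_of_neg (div_pos hE.1 (hG.mu_pos m))
        (by linarith [hd.pos (hG.adj_ne hE.1)])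
  linarith [hsub m]

theorem UnitHarmonic.not_extremal (hα : UnitHarmonic w μ d α) (hG : IsWeightedGraph w μ)
    (hconn : GraphConnected w) (hd : IsPathDistance w d) (hcurv : NonnegCurv w μ d)
    (x : V) (hx : ∀ y, Adj w x y → 0 < kappa w μ d x y) (a b : V) :
    ¬Extremal w d α a b := by
  intro hab
  obtain ⟨v, hv⟩ : ∃ v, ¬Acc (fun y x => Extremal w d α x y) v := by
    by_contra! hcon
    exact hα.not_wellFounded hG hconn hd hcurv hab ⟨hcon⟩
  have hxacc : ¬Acc (fun y x => Extremal w d α x y) x := by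
    obtain ⟨s, hs⟩ := exists_geodesic hG hconn hd α v x
    generalize d v x = l at hs
    induction hs with
    | nil => exact hv
    | cons hab _ ih => exact ih hx (hα.not_acc hG hconn hd hcurv (Or.inr hab) hv)
  obtain ⟨y, hy⟩ : ∃ y, Extremal w d α x y := by
    by_contra! hcon
    exact hxacc ⟨x, fun y hy => absurd hy (hcon y)⟩
  exact absurd (hα.kappa_nonpos hG hconn hd hy) (not_le.2 (hx y hy.1))

/-- Rescaling so that `‖α‖_∞ = 1` reduces the vanishing of `α` to the absence of extremal edges. -/
theorem eq_zero_of_mem_H1set (hG : IsWeightedGraph w μ)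
    (hconn : GraphConnected w) (hd : IsPathDistance w d) (hcurv : NonnegCurv w μ d)
    (x : V) (hx : ∀ y, Adj w x y → 0 < kappa w μ d x y) (hα : α ∈ H1set w μ d) : α = 0 := by
  by_contra hne
  obtain ⟨hs, hsupp, hX, hdiv⟩ := id hα
  have hex : ∃ a b, Adj w a b ∧ 0 < α a b := by
    by_contra! hcon
    refine hne (funext fun a => funext fun b => ?_)
    by_cases hab : Adj w a b
    · have h1 := hcon a b hab
      have h2 := hcon b a (hG.adj_symm hab)
      simp only [Pi.zero_apply]
      linarith [hs a b]
    · exact hsupp a b hab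
  obtain ⟨a₀, b₀, hab₀, hpos₀⟩ := hex
  obtain ⟨⟨a, b⟩, hab, hmax⟩ := Set.exists_max_image {z : V × V | Adj w z.1 z.2}
    (fun z => α z.1 z.2 / d z.1 z.2) (Set.toFinite _) ⟨(a₀, b₀), hab₀⟩
  simp only [Set.mem_ofPred_eq, Prod.forall] at hab hmax
  set C := α a b / d a b with hC
  have hCpos : 0 < C :=
    (div_pos hpos₀ (hd.pos (hG.adj_ne hab₀))).trans_le (hmax a₀ b₀ hab₀)
  have hunit : UnitHarmonic w μ d (fun u v => C⁻¹ * α u v) := by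
    refine ⟨⟨fun u v => ?_, fun u v h => ?_, fun n c h h' => ?_, fun u => ?_⟩, fun u v h => ?_⟩
    · simp only [hs u v, mul_neg]
    · simp only [hsupp u v h, mul_zero]
    · rw [← mul_sum, hX n c h h', mul_zero]
    · have := congrArg (C⁻¹ * ·) (hdiv u)
      simp only [mul_sum, mul_zero] at this
      rw [← this]
      exact sum_congr rfl fun y _ => by ring
    · rw [inv_mul_le_iff₀ hCpos, ← div_le_iff₀ (hd.pos (hG.adj_ne h))]
      exact hmax u v h
  refine hunit.not_extremal hG hconn hd hcurv x hx a b ⟨hab, ?_⟩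
  have h1 := (hd.pos (hG.adj_ne hab)).ne'
  have h2 : α a b = C * d a b := by rw [hC]; field_simp
  simp only [h2]
  field_simp

end Harmonic

end Paper

open Paper in
/-- **Theorem (vanishing Betti number).**
Let `G = (V, w, μ)` be a finite connected weighted graph with a general path distance `d` and
non-negative Ollivier curvature. Suppose there exists a vertex `x` such that `κ(x,y) > 0` for
every neighbour `y` of `x`. Then `β₁(M₂(G)) = 0`. -/
theorem betti_vanishes_of_positive_curvature_at_vertex
    {V : Type*} [Fintype V] [Nonempty V] (w : V → V → ℝ) (μ : V → ℝ) (d : V → V → ℝ)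
    (hG : IsWeightedGraph w μ) (hconn : GraphConnected w) (hd : IsPathDistance w d)
    (hcurv : NonnegCurv w μ d)
    (x : V) (hx : ∀ y, Adj w x y → 0 < kappa w μ d x y) :
    betti1 w μ d = 0 := by
  have h : H1set w μ d ⊆ {0} := fun α hα =>
    eq_zero_of_mem_H1set hG hconn hd hcurv x hx hα
  have hbot : Submodule.span ℝ (H1set w μ d) = ⊥ :=
    Submodule.span_eq_bot.2 fun α hα => h hα
  rw [betti1, hbot, finrank_bot]
end

section
/- Let G=(V,w,μ,d) be a finite connected weighted graph with a general path distance and non-negative Ollivier curvature. Then β₁(M₂(G)) ≤ deg_min/2, where deg_min is the minimum combinatorial vertex degree of G. -/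
/-!
Let `α` be a non-zero harmonic form, and call `C = max α(x,y)/d(x,y)` its maximal slope. The key
fact (`exists_max_edge`) is that *every* vertex has an outgoing edge of slope `C`. Granting this,
fix a vertex `x` of minimal degree. The functionals `α ↦ α(x,y)/d(x,y)`, for `y ∼ x`, are such that
for every non-zero `α`, hence also for `-α`, their maximum is a norm of `α`. So the unit ball of
this norm is a symmetric convex body in `H₁` cut out by `deg x` half-spaces. A symmetric convex
body of dimension `n` has at least `2n` facets, whence `2 β₁ ≤ deg x` (`two_mul_finrank_le`).

For the key fact, let `x ∼ y` be an edge of maximal slope, and let `x'`, `y'` lie in the closed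
neighbourhoods of `x` and `y`. Vanishing on the cycles of `X₂` lets one replace the walk
`x', x, y, y'` by a geodesic, so `α(x',x) + α(x,y) + α(y,y') ≤ C d(x',y')`, and in case of equality
(a tight pair) `x'` and `y'` are joined by a walk of maximal slope (`good_nbhd`). Hence the local
primitives of `α` at `x` and at `y` are admissible potentials for the curvature inequality, which
they turn into an equality because `δ*α = 0`. Perturbing them gives `Δ B (y) ≤ Δ A (x)` whenever
`A(x) = B(y)` and `B(y') ≤ A(x')` on tight pairs (`lap_le_of_tight`). This is used twice.

* The set of vertices that start arbitrarily long walks of maximal slope is closed under taking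
  neighbours (`Reach.neighbor`): the inequality is propagated along such a walk.
* This set is not empty (`exists_forall_reach`): otherwise the maximal length `ℓ(x)` of a walk of
  maximal slope from `x` is finite. For the first edge `x ∼ y` of a longest such walk one gets
  `Δℓ(x) ≥ Δℓ(y)`, and `Δℓ ≥ 0` where `ℓ = 0`, so `ℓ` is subharmonic and thus constant, which
  contradicts that `ℓ` decreases along edges of maximal slope.
-/

open Finset

namespace Paper

/-! ### Path distances and geodesics -/

section Metric

variable {V : Type*}

/-- `LWalk w d x y s`: there is a walk from `x` to `y` along edges of total `d`-length `s`. -/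
inductive LWalk (w d : V → V → ℝ) : V → V → ℝ → Prop
  | nil (x : V) : LWalk w d x x 0
  | cons {x z y : V} {s : ℝ} : Adj w x z → LWalk w d z y s → LWalk w d x y (d x z + s)

lemma LWalk.append {w d : V → V → ℝ} {x y z : V} {s t : ℝ} (h : LWalk w d x y s)
    (h' : LWalk w d y z t) : LWalk w d x z (s + t) := by
  induction h with
  | nil x => simpa using h'
  | cons a _ ih => rw [add_assoc]; exact LWalk.cons a (ih h')

lemma lwalk_of_path {w d : V → V → ℝ} (n : ℕ) : ∀ (c : Fin (n + 1) → V),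
    (∀ i : Fin n, Adj w (c i.castSucc) (c i.succ)) →
    LWalk w d (c 0) (c (Fin.last n)) (∑ i : Fin n, d (c i.castSucc) (c i.succ)) := by
  induction n with
  | zero => intro c _; simpa using LWalk.nil (c 0)
  | succ n ih =>
    intro c hc
    rw [Fin.sum_univ_succ]
    have := ih (fun i => c i.succ) (fun i => hc i.succ)
    exact LWalk.cons (hc 0) this

lemma path_of_lwalk {w d : V → V → ℝ} {x y : V} {s : ℝ} (h : LWalk w d x y s) :
    ∃ (n : ℕ) (c : Fin (n + 1) → V), c 0 = x ∧ c (Fin.last n) = y ∧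
        (∀ i : Fin n, Adj w (c i.castSucc) (c i.succ)) ∧
        s = ∑ i : Fin n, d (c i.castSucc) (c i.succ) := by
  induction h with
  | nil x => exact ⟨0, fun _ => x, rfl, rfl, fun i => i.elim0, by simp⟩
  | @cons x z y s a _ ih =>
    obtain ⟨n, c, h0, h1, h2, h3⟩ := ih
    refine ⟨n + 1, Fin.cons x c, rfl, ?_, ?_, ?_⟩
    · rw [← Fin.succ_last, Fin.cons_succ, h1]
    · intro i
      refine Fin.cases ?_ (fun i => ?_) i
      · simpa [h0] using a
      · have := h2 i
        rw [← Fin.succ_castSucc, Fin.cons_succ, Fin.cons_succ]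
        exact this
    · rw [Fin.sum_univ_succ, h3]
      congr 1
      simp [h0]

/-- The facts about a path distance on a finite graph that the argument needs: it is a metric,
edges have distinct endpoints, and any two distinct points are joined by a geodesic (recorded
through its first edge). -/
structure IsGeoDist (w d : V → V → ℝ) : Prop where
  adj_symm : ∀ {x y}, Adj w x y → Adj w y x
  adj_ne : ∀ {x y}, Adj w x y → x ≠ y
  symm : ∀ x y, d x y = d y x
  self : ∀ x, d x x = 0
  nonneg : ∀ x y, 0 ≤ d x y
  pos : ∀ {x y}, x ≠ y → 0 < d x y
  tri : ∀ x y z, d x z ≤ d x y + d y z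
  step : ∀ {x y}, x ≠ y → ∃ z, Adj w x z ∧ d x z + d z y = d x y

lemma isGeoDist_of_isPathDistance [Fintype V] {w d : V → V → ℝ} {μ : V → ℝ}
    (hG : IsWeightedGraph w μ) (hd : IsPathDistance w d) : IsGeoDist w d := by
  obtain ⟨hs, h0, hn, hglb⟩ := hd
  have lb : ∀ {x y s}, LWalk w d x y s → d x y ≤ s := fun h => (hglb _ _).1 (path_of_lwalk h)
  have gl : ∀ {x y r}, (∀ s, LWalk w d x y s → r ≤ s) → r ≤ d x y := by
    intro x y r h
    refine (hglb x y).2 ?_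
    rintro s ⟨n, c, rfl, rfl, hc, rfl⟩
    exact h _ (lwalk_of_path n c hc)
  have tri : ∀ x y z, d x z ≤ d x y + d y z := by
    intro x y z
    have : d x z - d x y ≤ d y z := by
      refine gl fun t ht => ?_
      have : d x z - t ≤ d x y := gl fun s hs => by linarith [lb (hs.append ht)]
      linarith
    linarith
  refine ⟨?_, ?_, hs, fun x => (h0 x x).2 rfl, hn, ?_, tri, ?_⟩
  · intro x y h; unfold Adj at *; rwa [hG.symm]
  · rintro x y h rfl; unfold Adj at h; rw [hG.loopless] at h; exact lt_irrefl _ h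
  · intro x y h
    exact lt_of_le_of_ne (hn x y) fun e => h ((h0 x y).1 e.symm)
  · intro x y hxy
    by_contra! hcon
    have hlt : ∀ z, Adj w x z → d x y < d x z + d z y := fun z hz =>
      lt_of_le_of_ne (tri x z y) (hcon z hz).symm
    have hev : ∀ᶠ r in nhdsWithin (d x y) (Set.Ioi (d x y)),
        ∀ z, Adj w x z → r < d x z + d z y := by
      rw [Filter.eventually_all]
      intro z
      by_cases hz : Adj w x z
      · filter_upwards [nhdsWithin_le_nhds (Iio_mem_nhds (hlt z hz))] with r hr _ using hr
      · exact Filter.Eventually.of_forall fun r h => absurd h hz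
    obtain ⟨r, hr, hr'⟩ := (hev.and self_mem_nhdsWithin).exists
    have : r ≤ d x y := by
      refine gl fun s hs => ?_
      cases hs with
      | nil => exact absurd rfl hxy
      | cons a h => linarith [hr _ a, lb h]
    exact absurd hr' (not_lt.2 this)

/-- `q 0, …, q k` is a geodesic: consecutive points are adjacent, and the total edge length is the
distance of the endpoints. -/
structure IsGeodesic (w d : V → V → ℝ) (k : ℕ) (q : ℕ → V) : Prop where
  adj : ∀ i < k, Adj w (q i) (q (i + 1))
  length : ∑ i ∈ range k, d (q i) (q (i + 1)) = d (q 0) (q k)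

lemma IsGeoDist.exists_geodesic [Fintype V] {w d : V → V → ℝ} (hd : IsGeoDist w d) (x y : V) :
    ∃ (k : ℕ) (q : ℕ → V), q 0 = x ∧ q k = y ∧ IsGeodesic w d k q := by
  classical
  by_contra hcon
  -- a point without a geodesic to `y` that is as close to `y` as possible
  obtain ⟨z, hz, hmin⟩ := Finset.exists_min_image
    (univ.filter fun z => ¬ ∃ (k : ℕ) (q : ℕ → V), q 0 = z ∧ q k = y ∧ IsGeodesic w d k q)
    (fun z => d z y) ⟨x, by simpa using hcon⟩
  simp only [mem_filter, mem_univ, true_and] at hz hmin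
  by_cases hzy : z = y
  · exact hz ⟨0, fun _ => y, hzy.symm, rfl, by simp, by simp [hd.self]⟩
  obtain ⟨u, hu, hdu⟩ := hd.step hzy
  have hex : ∃ (k : ℕ) (q : ℕ → V), q 0 = u ∧ q k = y ∧ IsGeodesic w d k q := by
    by_contra h
    linarith [hmin u h, hd.pos (hd.adj_ne hu)]
  obtain ⟨k, q, h0, hk, hq⟩ := hex
  refine hz ⟨k + 1, fun i => Nat.casesOn i z q, rfl, hk, ?_, ?_⟩
  · rintro (_ | i) hi
    · simpa [h0] using hu
    · exact hq.adj i (by omega)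
  · rw [sum_range_succ']
    have := hq.length
    rw [h0, hk] at this
    change (∑ i ∈ range k, d (q i) (q (i + 1))) + d z (q 0) = d z (q k)
    rw [h0, hk, this, ← hdu, add_comm]

variable {w d : V → V → ℝ} {k : ℕ} {q : ℕ → V}

lemma IsGeoDist.dist_le_sum (hd : IsGeoDist w d) (q : ℕ → V) (i : ℕ) (n : ℕ) :
    d (q i) (q (i + n)) ≤ ∑ l ∈ range n, d (q (i + l)) (q (i + l + 1)) := by
  induction n with
  | zero => simp [hd.self]
  | succ n ih =>
    rw [sum_range_succ]
    have := hd.tri (q i) (q (i + n)) (q (i + n + 1))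
    rw [← add_assoc]
    linarith

/-- Every point of a geodesic lies metrically between the endpoints, and initial segments of
geodesics are geodesics. -/
lemma IsGeodesic.split (hd : IsGeoDist w d) (hq : IsGeodesic w d k q) {i : ℕ} (hi : i ≤ k) :
    ∑ l ∈ range i, d (q l) (q (l + 1)) = d (q 0) (q i) ∧
      d (q 0) (q i) + d (q i) (q k) = d (q 0) (q k) := by
  obtain ⟨n, rfl⟩ := Nat.exists_eq_add_of_le hi
  have h1 := hd.dist_le_sum q 0 i
  have h2 := hd.dist_le_sum q i n
  have h3 := hq.length
  rw [sum_range_add] at h3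
  simp only [zero_add] at h1
  have h4 := hd.tri (q 0) (q i) (q (i + n))
  constructor <;> linarith

lemma IsGeodesic.initial (hd : IsGeoDist w d) (hq : IsGeodesic w d k q) {i : ℕ} (hi : i ≤ k) :
    IsGeodesic w d i q :=
  ⟨fun l hl => hq.adj l (by omega), (hq.split hd hi).1⟩

lemma IsGeodesic.dist_lt (hd : IsGeoDist w d) (hq : IsGeodesic w d k q) {i j : ℕ} (hij : i < j)
    (hj : j ≤ k) : d (q 0) (q i) < d (q 0) (q j) := by
  have hqj := hq.initial hd hj
  have h1 := (hqj.split hd (show i + 1 ≤ j by omega))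
  have h2 := (hqj.split hd (show i ≤ j by omega))
  have h3 := hd.pos (hd.adj_ne (hq.adj i (by omega)))
  have h4 := h1.1
  rw [sum_range_succ, h2.1] at h4
  linarith [h1.2, hd.nonneg (q (i + 1)) (q j)]

lemma IsGeodesic.injOn (hd : IsGeoDist w d) (hq : IsGeodesic w d k q) {i j : ℕ} (hi : i ≤ k)
    (hj : j ≤ k) (h : q i = q j) : i = j := by
  rcases lt_trichotomy i j with hij | hij | hij
  · have := hq.dist_lt hd hij hj; rw [h] at this; exact absurd this (lt_irrefl _)
  · exact hij
  · have := hq.dist_lt hd hij hi; rw [h] at this; exact absurd this (lt_irrefl _)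

end Metric

/-! ### Walks of maximal slope and cycles in `X₂` -/

section Cycles

variable {V : Type*} {w d : V → V → ℝ} {μ : V → ℝ} {α : V → V → ℝ}

/-- The cyclic enumeration `q k, x₁, x₂, q 0, q 1, …, q k` of a cycle closed up by a path `q`. -/
def cycleSeq (k : ℕ) (q : ℕ → V) (x₁ x₂ : V) : ℕ → V
  | 0 => q k
  | 1 => x₁
  | 2 => x₂
  | i + 3 => q i

/-- `Reach w d α C x s`: some walk starting at `x`, all of whose edges have maximal slope `C`,
has `α`-sum at least `s`. -/
inductive Reach (w d α : V → V → ℝ) (C : ℝ) : V → ℝ → Prop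
  | zero {x : V} {s : ℝ} : s ≤ 0 → Reach w d α C x s
  | step {x y : V} {s : ℝ} : Adj w x y → α x y = C * d x y → Reach w d α C y (s - α x y) →
      Reach w d α C x s

lemma Reach.mono {C : ℝ} {x : V} {s : ℝ} (h : Reach w d α C x s) :
    ∀ {t : ℝ}, t ≤ s → Reach w d α C x t := by
  induction h with
  | zero h => exact fun ht => .zero (ht.trans h)
  | step a e _ ih => exact fun ht => .step a e (ih (by linarith))

/-- `Good w d α C u t s`: the number `s`, in practice the `α`-sum along some walk from `u` to `t`,
is at most `C d(u,t)`, and if equality holds then `u` and `t` are joined by a walk of maximal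
slope with `α`-sum `s` (recorded through the effect on `Reach`). -/
def Good (w d α : V → V → ℝ) (C : ℝ) (u t : V) (s : ℝ) : Prop :=
  s ≤ C * d u t ∧ (s = C * d u t → ∀ r, Reach w d α C t r → Reach w d α C u (r + s))

variable {C : ℝ}

lemma good_refl (hd : IsGeoDist w d) (u : V) : Good w d α C u u 0 := by
  refine ⟨by simp [hd.self], fun _ r hr => by simpa using hr⟩

lemma Good.comp {u v t : V} {s s' : ℝ} (h : Good w d α C u v s) (h' : Good w d α C v t s')
    (hdist : d u v + d v t = d u t) : Good w d α C u t (s + s') := by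
  have e : C * d u t = C * d u v + C * d v t := by rw [← hdist]; ring
  refine ⟨by linarith [h.1, h'.1], fun heq r hr => ?_⟩
  have h1 : s = C * d u v := by linarith [h.1, h'.1]
  have h2 : s' = C * d v t := by linarith [h.1, h'.1]
  have := h.2 h1 _ (h'.2 h2 r hr)
  rwa [show r + (s + s') = r + s' + s by ring]

variable [Fintype V]

/-- A form in `H₁` sums to zero along the cycle `q k ∼ x₁ ∼ x₂ ∼ q 0 ∼ … ∼ q k` when `q` is a
geodesic and the three remaining edges do not form a geodesic. The case `k = 0` is a triangle. -/
lemma cycle_sum (hd : IsGeoDist w d) (hα : α ∈ H1set w μ d) {k : ℕ} {q : ℕ → V} {x₁ x₂ : V}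
    (hq : IsGeodesic w d k q) (h1 : ∀ i ≤ k, q i ≠ x₁) (h2 : ∀ i ≤ k, q i ≠ x₂)
    (a01 : Adj w (q k) x₁) (a12 : Adj w x₁ x₂) (a23 : Adj w x₂ (q 0))
    (hlt : d (q k) (q 0) < d (q k) x₁ + d x₁ x₂ + d x₂ (q 0)) :
    α (q k) x₁ + α x₁ x₂ + α x₂ (q 0) = ∑ i ∈ range k, α (q (i + 1)) (q i) := by
  set F := cycleSeq k q x₁ x₂ with hF
  set c : ZMod (k + 3) → V := fun i => F i.val with hc
  have hval : ∀ i : ZMod (k + 3), i.val < k + 3 := fun i => ZMod.val_lt i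
  have hone : (1 : ZMod (k + 3)).val = 1 := by
    have := ZMod.val_natCast (k + 3) 1
    rw [Nat.mod_eq_of_lt (by omega)] at this
    simpa using this
  have htwo : (2 : ZMod (k + 3)).val = 2 := by
    have := ZMod.val_natCast (k + 3) 2
    rw [Nat.mod_eq_of_lt (by omega)] at this
    simpa using this
  have hsucc : ∀ i, c (i + 1) = F (i.val + 1) := by
    intro i
    simp only [hc, ZMod.val_add, hone]
    rcases Nat.lt_or_ge (i.val + 1) (k + 3) with h | h
    · rw [Nat.mod_eq_of_lt h]
    · have e : i.val + 1 = k + 3 := by have := hval i; omega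
      rw [e, Nat.mod_self]
      rfl
  have hFadj : ∀ j < k + 3, Adj w (F j) (F (j + 1)) := by
    rintro (_ | _ | _ | j) hj
    · exact a01
    · exact a12
    · exact a23
    · exact hq.adj j (by omega)
  have hx := hd.adj_ne a12
  have hFinj : ∀ i < k + 3, ∀ j < k + 3, F i = F j → i = j := by
    rintro (_ | _ | _ | i) hi (_ | _ | _ | j) hj h
    · rfl
    · exact absurd h (h1 k le_rfl)
    · exact absurd h (h2 k le_rfl)
    · have := hq.injOn hd le_rfl (by omega) h; omega
    · exact absurd h.symm (h1 k le_rfl)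
    · rfl
    · exact absurd h hx
    · exact absurd h.symm (h1 j (by omega))
    · exact absurd h.symm (h2 k le_rfl)
    · exact absurd h.symm hx
    · rfl
    · exact absurd h.symm (h2 j (by omega))
    · have := hq.injOn hd (by omega) le_rfl h; omega
    · exact absurd h (h1 i (by omega))
    · exact absurd h (h2 i (by omega))
    · have := hq.injOn hd (by omega) (by omega) h; omega
  have hcyc : IsCycle w c := by
    refine ⟨fun i j h => ZMod.val_injective _ (hFinj _ (hval i) _ (hval j) h), fun i => ?_⟩
    rw [hsucc]
    exact hFadj _ (hval i)
  have hsum : ∀ g : ℕ → ℝ, ∑ i : ZMod (k + 3), g i.val = ∑ j ∈ range (k + 3), g j :=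
    fun g => Fin.sum_univ_eq_sum_range g (k + 3)
  have hX : InX2 w d c := by
    rcases Nat.eq_zero_or_pos k with rfl | hk
    · exact Or.inl rfl
    refine Or.inr ?_
    have hthree : (3 : ZMod (k + 3)).val = 3 := by
      have := ZMod.val_natCast (k + 3) 3
      rw [Nat.mod_eq_of_lt (by omega)] at this
      simpa using this
    have c0 : c 0 = q k := by simp [hc, hF, cycleSeq]
    have c1 : c 1 = x₁ := by simp only [hc, hone]; rfl
    have c2 : c 2 = x₂ := by simp only [hc, htwo]; rfl
    have c3 : c 3 = q 0 := by simp only [hc, hthree]; rfl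
    rw [c0, c1, c2, c3]
    refine ⟨hlt, ?_⟩
    rw [← hq.length, sum_filter]
    have e : ∀ i : ZMod (k + 3), (if i ≠ 0 ∧ i ≠ 1 ∧ i ≠ 2 then d (c i) (c (i + 1)) else 0) =
        (fun j : ℕ => if j ≠ 0 ∧ j ≠ 1 ∧ j ≠ 2 then d (F j) (F (j + 1)) else 0) i.val := by
      intro i
      have e0 : i = 0 ↔ i.val = 0 := (ZMod.val_eq_zero i).symm
      have e1 : i = 1 ↔ i.val = 1 := by rw [← (ZMod.val_injective (k + 3)).eq_iff, hone]
      have e2 : i = 2 ↔ i.val = 2 := by rw [← (ZMod.val_injective (k + 3)).eq_iff, htwo]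
      simp only [ne_eq, e0, e1, e2, hsucc]
      rfl
    rw [sum_congr rfl fun i _ => e i, hsum (fun j : ℕ => if j ≠ 0 ∧ j ≠ 1 ∧ j ≠ 2 then
      d (F j) (F (j + 1)) else 0), sum_range_succ', sum_range_succ', sum_range_succ']
    simp [hF, cycleSeq]
  have h := hα.2.2.1 k c hcyc hX
  have e : ∀ i : ZMod (k + 3), α (c i) (c (i + 1)) =
      (fun j : ℕ => α (F j) (F (j + 1))) i.val := fun i => by rw [hsucc]
  rw [sum_congr rfl fun i _ => e i, hsum (fun j : ℕ => α (F j) (F (j + 1))), sum_range_succ',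
    sum_range_succ', sum_range_succ'] at h
  have h' : ∑ i ∈ range k, α (q (i + 1)) (q i) = - ∑ i ∈ range k, α (q i) (q (i + 1)) := by
    rw [← sum_neg_distrib]
    exact sum_congr rfl fun i _ => hα.1 _ _
  simp only [hF, cycleSeq, zero_add] at h
  rw [h']
  linarith

/-- The slope bound `α ≤ C d` on edges, with `C > 0`, for a form `α` in `H₁`. -/
structure IsSlope (w : V → V → ℝ) (μ : V → ℝ) (d α : V → V → ℝ) (C : ℝ) : Prop where
  mem : α ∈ H1set w μ d
  pos : 0 < C
  le : ∀ u v, Adj w u v → α u v ≤ C * d u v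

lemma good_edge (hα : IsSlope w μ d α C) {u v : V} (h : Adj w u v) :
    Good w d α C u v (α u v) :=
  ⟨hα.le u v h, fun e r hr => .step h e (by simpa using hr)⟩

lemma good_geodesic (hd : IsGeoDist w d) (hα : IsSlope w μ d α C) {k : ℕ} {q : ℕ → V}
    (hq : IsGeodesic w d k q) :
    Good w d α C (q k) (q 0) (∑ i ∈ range k, α (q (i + 1)) (q i)) := by
  induction k with
  | zero => simpa using good_refl hd (q 0)
  | succ k ih =>
    rw [sum_range_succ, add_comm (Finset.sum _ _)]
    refine (good_edge hα (hd.adj_symm (hq.adj k (by omega)))).comp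
      (ih (hq.initial hd (by omega))) ?_
    have := (hq.split hd (show k ≤ k + 1 by omega)).2
    rw [hd.symm (q (k + 1)) (q 0), hd.symm (q (k + 1)) (q k), hd.symm (q k) (q 0)]
    linarith

lemma form_self (hα : α ∈ H1set w μ d) (x : V) : α x x = 0 := by
  linarith [hα.1 x x]

/-- Walks with two edges. A walk `u ∼ v ∼ t` that is not a geodesic closes up with a geodesic from
`t` to `u` to a cycle in `X₂`, whose first edge is the last edge of that geodesic. -/
lemma good_two (hd : IsGeoDist w d) (hα : IsSlope w μ d α C) {u v t : V} (huv : Adj w u v)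
    (hvt : Adj w v t) : Good w d α C u t (α u v + α v t) := by
  by_cases hut : u = t
  · subst hut
    rw [hα.mem.1 v u, add_neg_cancel]
    exact good_refl hd u
  by_cases hdist : d u v + d v t = d u t
  · exact (good_edge hα huv).comp (good_edge hα hvt) hdist
  have hlt : d u t < d u v + d v t := lt_of_le_of_ne (hd.tri u v t) (Ne.symm hdist)
  obtain ⟨k, q, h0, hk, hq⟩ := hd.exists_geodesic t u
  obtain _ | k := k
  · exact absurd (hk.symm.trans h0) hut
  have hgood := good_geodesic hd hα hq
  rw [h0, hk] at hgood
  have hqk : Adj w (q k) u := hk ▸ hq.adj k (by omega)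
  have hv : ∀ i ≤ k, q i ≠ v := by
    rintro i hi rfl
    have := (hq.split hd (show i ≤ k + 1 by omega)).2
    rw [h0, hk, hd.symm t, hd.symm (q i) u, hd.symm t u] at this
    linarith
  have hu : ∀ i ≤ k, q i ≠ u := by
    intro i hi e
    have := hq.injOn hd (show i ≤ k + 1 by omega) le_rfl (e.trans hk.symm)
    omega
  have := cycle_sum hd hα.mem (hq.initial hd (show k ≤ k + 1 by omega)) hu hv hqk huv
    (h0 ▸ hvt) (by rw [h0]; linarith [hd.tri (q k) u t])
  rw [sum_range_succ, hk, ← this, h0] at hgood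
  rwa [show α u v + α v t = α (q k) u + α u v + α v t + α u (q k) by
    rw [hα.mem.1 (q k) u]; ring]

/-- Walks with three edges: either the walk can be replaced by a shorter one along a geodesic, or
it closes up with a geodesic to a cycle in `X₂`. -/
lemma good_three (hd : IsGeoDist w d) (hα : IsSlope w μ d α C) {x' x y y' : V}
    (h1 : Adj w x' x) (h2 : Adj w x y) (h3 : Adj w y y') :
    Good w d α C x' y' (α x' x + α x y + α y y') := by
  by_cases e1 : d x' x + d x y' = d x' y'
  · rw [add_assoc]
    exact (good_edge hα h1).comp (good_two hd hα h2 h3) e1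
  by_cases e2 : d x' y + d y y' = d x' y'
  · exact (good_two hd hα h1 h2).comp (good_edge hα h3) e2
  obtain ⟨k, q, h0, hk, hq⟩ := hd.exists_geodesic y' x'
  have hgood := good_geodesic hd hα hq
  have key : ∀ z, d x' z + d z y' ≠ d x' y' → ∀ i ≤ k, q i ≠ z := by
    rintro z hz i hi rfl
    have := (hq.split hd hi).2
    rw [h0, hk, hd.symm y', hd.symm (q i) x', hd.symm y'] at this
    exact hz (by linarith)
  have hlt : d x' y' < d x' x + d x y' := lt_of_le_of_ne (hd.tri _ _ _) (Ne.symm e1)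
  have := cycle_sum hd hα.mem hq (key x e1) (key y e2) (hk ▸ h1) h2 (h0 ▸ h3)
    (by rw [h0, hk]; linarith [hd.tri x y y'])
  rw [← this, h0, hk] at hgood
  exact hgood

/-- Every pair in the product of the closed neighbourhoods of `x` and `y` is `Good`. -/
lemma good_nbhd (hd : IsGeoDist w d) (hα : IsSlope w μ d α C) {x y x' y' : V}
    (h : Adj w x y) (hx : x' = x ∨ Adj w x x') (hy : y' = y ∨ Adj w y y') :
    Good w d α C x' y' (α x' x + α x y + α y y') := by
  rcases hx with rfl | hx <;> rcases hy with rfl | hy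
  · simpa [form_self hα.mem] using good_edge hα h
  · simpa [form_self hα.mem] using good_two hd hα h hy
  · simpa [form_self hα.mem] using good_two hd hα (hd.adj_symm hx) h
  · exact good_three hd hα (hd.adj_symm hx) h hy

end Cycles

/-! ### Curvature and tight pairs -/

section Transport

open Filter Topology

variable {V : Type*} {w d : V → V → ℝ} {μ : V → ℝ} {α : V → V → ℝ} {C : ℝ}

lemma connected_induction (hconn : GraphConnected w) {P : V → Prop}
    (hP : ∀ x y, Adj w x y → P x → P y) {x : V} (hx : P x) (y : V) : P y := by
  obtain ⟨n, c, rfl, rfl, hc⟩ := hconn x y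
  have : ∀ i : Fin (n + 1), P (c i) := fun i => by
    induction i using Fin.induction with
    | zero => exact hx
    | succ i ih => exact hP _ _ (hc i) ih
  exact this _

variable [Fintype V]

lemma lap_le_of_lipschitz (hG : IsWeightedGraph w μ) (hd : IsGeoDist w d)
    (hcurv : NonnegCurv w μ d) {x y : V} (hxy : Adj w x y) {f : V → ℝ}
    (hf : ∀ u v, f v ≤ f u + d u v) (he : f y = f x + d x y) : lap w μ f y ≤ lap w μ f x := by
  have hpos := hd.pos (hd.adj_ne hxy)
  have hgrad : grad d f y x = 1 := by
    unfold grad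
    rw [he, hd.symm y x, add_sub_cancel_left, div_self hpos.ne']
  have hfin : ∀ g : V → ℝ, {r : ℝ | ∃ x y, Adj w x y ∧ r = |grad d g x y|}.Finite := by
    intro g
    refine (Set.finite_range fun p : V × V => |grad d g p.1 p.2|).subset ?_
    rintro r ⟨u, v, _, rfl⟩
    exact ⟨(u, v), rfl⟩
  have hnorm : gradNorm w d f = 1 := by
    refine IsGreatest.csSup_eq ⟨⟨y, x, hd.adj_symm hxy, by rw [hgrad, abs_one]⟩, ?_⟩
    rintro r ⟨u, v, huv, rfl⟩
    have hp := hd.pos (hd.adj_ne huv)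
    unfold grad
    rw [abs_div, abs_of_pos hp, div_le_one hp, abs_le]
    have h1 := hf u v
    have h2 := hf v u
    rw [hd.symm v u] at h2
    constructor <;> linarith
  have hbdd : BddBelow {r : ℝ | ∃ g : V → ℝ, grad d g y x = 1 ∧ gradNorm w d g = 1 ∧
      r = grad d (lap w μ g) x y} := by
    have hlap : ∀ g : V → ℝ, gradNorm w d g = 1 → ∀ z,
        |lap w μ g z| ≤ ∑ u, w z u / μ z * d z u := by
      intro g hg z
      refine (Finset.abs_sum_le_sum_abs _ _).trans (Finset.sum_le_sum fun u _ => ?_)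
      have hw : 0 ≤ w z u / μ z := div_nonneg (hG.nonneg _ _) (hG.mu_pos _).le
      rw [abs_mul, abs_of_nonneg hw]
      by_cases hzu : Adj w z u
      · have hp := hd.pos (hd.adj_ne hzu)
        have : |grad d g z u| ≤ 1 := hg ▸ le_csSup (hfin g).bddAbove ⟨z, u, hzu, rfl⟩
        unfold grad at this
        rw [abs_div, abs_of_pos hp, div_le_one hp, abs_sub_comm] at this
        exact mul_le_mul_of_nonneg_left this hw
      · have : w z u = 0 := le_antisymm (not_lt.1 hzu) (hG.nonneg _ _)
        simp [this]
    refine ⟨-((∑ u, w x u / μ x * d x u) + ∑ u, w y u / μ y * d y u) / d x y, ?_⟩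
    rintro r ⟨g, _, hg, rfl⟩
    unfold grad
    refine div_le_div_of_nonneg_right ?_ hpos.le
    have h1 := hlap g hg x
    have h2 := hlap g hg y
    linarith [neg_abs_le (lap w μ g x), le_abs_self (lap w μ g y)]
  have h := (hcurv x y hxy).trans (csInf_le hbdd ⟨f, hgrad, hnorm, rfl⟩)
  unfold grad at h
  have := mul_nonneg h hpos.le
  rw [div_mul_cancel₀ _ hpos.ne'] at this
  linarith

/-- Non-negative curvature as a Kantorovich-type inequality for two potentials, `a` near `x` and
`b` near `y`: the inf-convolution of `a` with the distance is an admissible test function. -/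
lemma lap_le_of_potentials (hG : IsWeightedGraph w μ) (hd : IsGeoDist w d)
    (hcurv : NonnegCurv w μ d) {x y : V} (hxy : Adj w x y) {a b : V → ℝ}
    (hab : ∀ x' y', (x' = x ∨ Adj w x x') → (y' = y ∨ Adj w y y') → b y' ≤ a x' + d x' y')
    (he : b y = a x + d x y) : lap w μ b y ≤ lap w μ a x := by
  classical
  set S : Finset V := univ.filter fun x' => x' = x ∨ Adj w x x' with hS
  have hmem : ∀ x', x' ∈ S ↔ x' = x ∨ Adj w x x' := by simp [hS]
  have hne : S.Nonempty := ⟨x, (hmem x).2 (Or.inl rfl)⟩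
  set f : V → ℝ := fun v => S.inf' hne fun x' => a x' + d x' v with hf
  have hfle : ∀ v x', x' ∈ S → f v ≤ a x' + d x' v := fun v x' hx' => Finset.inf'_le _ hx'
  have hlef : ∀ v r, (∀ x' ∈ S, r ≤ a x' + d x' v) → r ≤ f v := fun v r h =>
    (Finset.le_inf'_iff _ _).2 h
  have hfa : ∀ x', x' ∈ S → f x' ≤ a x' := fun x' hx' => by
    simpa [hd.self] using hfle x' x' hx'
  have hfb : ∀ y', (y' = y ∨ Adj w y y') → b y' ≤ f y' := fun y' hy' =>
    hlef _ _ fun x' hx' => hab x' y' ((hmem _).1 hx') hy'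
  have hlip : ∀ u v, f v ≤ f u + d u v := by
    intro u v
    have : f v - d u v ≤ f u := hlef _ _ fun x' hx' => by
      linarith [hfle v x' hx', hd.tri x' u v]
    linarith
  have hxS := (hmem x).2 (Or.inl rfl)
  have h1 := hfa x hxS
  have h2 := hfb y (Or.inl rfl)
  have h3 := hlip x y
  have hfx : f x = a x := by linarith
  have hfy : f y = b y := by linarith
  have hmain := lap_le_of_lipschitz hG hd hcurv hxy hlip (by linarith)
  have hw : ∀ z u, 0 ≤ w z u / μ z := fun z u => div_nonneg (hG.nonneg _ _) (hG.mu_pos _).le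
  have hw0 : ∀ z u, ¬ Adj w z u → w z u / μ z = 0 := fun z u h => by
    rw [le_antisymm (not_lt.1 h) (hG.nonneg _ _), zero_div]
  have hb : lap w μ b y ≤ lap w μ f y := by
    refine Finset.sum_le_sum fun u _ => ?_
    by_cases hu : Adj w y u
    · exact mul_le_mul_of_nonneg_left (by linarith [hfb u (Or.inr hu)]) (hw _ _)
    · simp [hw0 _ _ hu]
  have ha : lap w μ f x ≤ lap w μ a x := by
    refine Finset.sum_le_sum fun u _ => ?_
    by_cases hu : Adj w x u
    · exact mul_le_mul_of_nonneg_left (by linarith [hfa u ((hmem _).2 (Or.inr hu))]) (hw _ _)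
    · simp [hw0 _ _ hu]
  exact hb.trans (hmain.trans ha)

lemma lap_add (f g : V → ℝ) (x : V) :
    lap w μ (fun v => f v + g v) x = lap w μ f x + lap w μ g x := by
  unfold lap
  rw [← Finset.sum_add_distrib]
  exact Finset.sum_congr rfl fun _ _ => by ring

lemma lap_const_mul (r : ℝ) (f : V → ℝ) (x : V) :
    lap w μ (fun v => r * f v) x = r * lap w μ f x := by
  unfold lap
  rw [Finset.mul_sum]
  exact Finset.sum_congr rfl fun _ _ => by ring

/-- A form of `H₁` is the gradient at `x` of a function that is harmonic at `x`. -/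
lemma lap_form (hα : α ∈ H1set w μ d) (c : ℝ) (x : V) :
    lap w μ (fun v => c + α x v) x = 0 := by
  rw [← hα.2.2.2 x]
  unfold lap
  exact Finset.sum_congr rfl fun _ _ => by simp only [form_self hα]; ring

/-- The equality case of the curvature inequality along an edge `x ∼ y` of maximal slope. The
local primitives of `α` at `x` and `y` saturate the inequality for potentials, so it can be
differentiated in the direction of any pair `A`, `B` that is ordered on all tight pairs, that is,
on those `(x', y')` for which the slope along `x', x, y, y'` is maximal. -/
lemma lap_le_of_tight (hG : IsWeightedGraph w μ) (hd : IsGeoDist w d)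
    (hcurv : NonnegCurv w μ d) (hα : IsSlope w μ d α C) {x y : V} (hxy : Adj w x y)
    (hmax : α x y = C * d x y) {A B : V → ℝ}
    (hAB : ∀ x' y', (∀ r, Reach w d α C y' r →
      Reach w d α C x' (r + (α x' x + α x y + α y y'))) → B y' ≤ A x')
    (he : A x = B y) : lap w μ B y ≤ lap w μ A x := by
  have hev : ∀ᶠ ε in 𝓝[>] (0 : ℝ), ∀ x' y', (x' = x ∨ Adj w x x') → (y' = y ∨ Adj w y y') →
      (α x' x + α x y + α y y') + ε * (B y' - A x') ≤ C * d x' y' := by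
    simp only [Filter.eventually_all]
    intro x' y' hx' hy'
    have hg := good_nbhd hd hα hxy hx' hy'
    rcases hg.1.lt_or_eq with hlt | heq
    · have hc : Continuous fun ε : ℝ => (α x' x + α x y + α y y') + ε * (B y' - A x') := by
        fun_prop
      have ht := (hc.tendsto 0).mono_left (nhdsWithin_le_nhds (s := Set.Ioi 0))
      simp only [zero_mul, add_zero] at ht
      exact (ht.eventually_lt_const hlt).mono fun _ h => h.le
    · filter_upwards [self_mem_nhdsWithin] with ε hε
      have h1 := hAB x' y' (hg.2 heq)
      have h2 : ε * (B y' - A x') ≤ 0 :=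
        mul_nonpos_of_nonneg_of_nonpos (le_of_lt hε) (by linarith)
      linarith
  obtain ⟨ε, hε, hpos⟩ := (hev.and self_mem_nhdsWithin).exists
  have hpos : 0 < ε := hpos
  have hC := hα.pos
  have h := lap_le_of_potentials hG hd hcurv hxy
    (a := fun v => C⁻¹ * ((0 + α x v) + ε * A v))
    (b := fun v => C⁻¹ * ((α x y + α y v) + ε * B v)) ?_ ?_
  · rw [lap_const_mul, lap_const_mul, lap_add (fun v => α x y + α y v) (fun v => ε * B v),
      lap_add (fun v => 0 + α x v) (fun v => ε * A v), lap_form hα.mem, lap_form hα.mem,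
      lap_const_mul, lap_const_mul, zero_add, zero_add] at h
    exact le_of_mul_le_mul_left (le_of_mul_le_mul_left h (inv_pos.2 hC)) hpos
  · intro x' y' hx' hy'
    have h1 := hε x' y' hx' hy'
    rw [hα.mem.1 x' x] at h1
    have h2 : C⁻¹ * (α x y + α y y' + ε * B y') ≤
        C⁻¹ * (0 + α x x' + ε * A x' + C * d x' y') :=
      mul_le_mul_of_nonneg_left (by linarith) (inv_pos.2 hC).le
    rwa [mul_add _ _ (C * _), inv_mul_cancel_left₀ hC.ne'] at h2
  · simp only [form_self hα.mem, hmax, he]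
    field_simp
    ring

/-- If a walk of maximal slope with `α`-sum at least `s` starts at `x`, then one starts at every
neighbour `v` of `x`, with `s` replaced by `s - m + α v x`, where `m` is any bound for `α`. The
inequality for tight pairs is propagated backwards along the walk from `x`, and the error `m` stems
from the far end of that walk. -/
lemma Reach.neighbor (hG : IsWeightedGraph w μ) (hd : IsGeoDist w d)
    (hcurv : NonnegCurv w μ d) (hα : IsSlope w μ d α C) {m : ℝ} (hm : ∀ u v, α u v ≤ m) {x : V}
    {s : ℝ} (h : Reach w d α C x s) {v : V} (hv : Adj w x v) :
    Reach w d α C v (s - m + α v x) := by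
  classical
  have hm0 : 0 ≤ m := form_self hα.mem x ▸ hm x x
  have key : 0 ≤ lap w μ (fun v => if Reach w d α C v (s - m + α v x) then 1 else 0) x := by
    clear hv
    induction h with
    | @zero x s hs =>
      have : ∀ v, Reach w d α C v (s - m + α v x) := fun v => .zero (by linarith [hm v x])
      simp [this, lap]
    | @step x y s hxy hmax hy ih =>
      refine ih.trans (lap_le_of_tight hG hd hcurv hα hxy hmax (fun x' y' ht => ?_) ?_)
      · split_ifs with h1 h2 h2
        · exact le_rfl
        · refine absurd ((ht _ h1).mono ?_) h2
          rw [hα.mem.1 y' y]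
          linarith
        · exact zero_le_one
        · exact le_rfl
      · have h1 : Reach w d α C x (s - m + α x x) := by
          refine (Reach.step hxy hmax hy).mono ?_
          rw [form_self hα.mem]; linarith
        have h2 : Reach w d α C y (s - α x y - m + α y y) := by
          refine hy.mono ?_
          rw [form_self hα.mem]; linarith
        rw [if_pos h1, if_pos h2]
  by_contra hcon
  have hx : Reach w d α C x (s - m + α x x) := h.mono (by rw [form_self hα.mem]; linarith)
  unfold lap at key
  simp only [hx, if_true] at key
  have hpos : 0 < w x v / μ x := div_pos hv (hG.mu_pos x)
  refine absurd key (not_le.2 (Finset.sum_neg' (fun u _ => ?_) ⟨v, mem_univ v, ?_⟩))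
  · refine mul_nonpos_of_nonneg_of_nonpos (div_nonneg (hG.nonneg _ _) (hG.mu_pos _).le) ?_
    split_ifs <;> norm_num
  · rw [if_neg hcon]
    linarith

/-- Some vertex is the start of arbitrarily long walks of maximal slope. Otherwise the maximal
length `ℓ` of such walks would be a subharmonic function, hence constant, whereas it strictly
decreases along an edge of maximal slope. -/
lemma exists_forall_reach (hG : IsWeightedGraph w μ) (hconn : GraphConnected w)
    (hd : IsGeoDist w d) (hcurv : NonnegCurv w μ d) (hα : IsSlope w μ d α C) {x₀ y₀ : V}
    (h₀ : Adj w x₀ y₀) (hmax₀ : α x₀ y₀ = C * d x₀ y₀) : ∃ x, ∀ s, Reach w d α C x s := by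
  classical
  by_contra! hcon
  set ℓ : V → ℝ := fun x => sSup {s | Reach w d α C x s} with hℓ
  have hbdd : ∀ x, BddAbove {s | Reach w d α C x s} := by
    intro x
    obtain ⟨s, hs⟩ := hcon x
    refine ⟨s, fun t ht => ?_⟩
    by_contra hlt
    exact hs (Reach.mono ht (not_le.1 hlt).le)
  have hle : ∀ {x s}, Reach w d α C x s → s ≤ ℓ x := fun h => le_csSup (hbdd _) h
  have hzero : ∀ x, Reach w d α C x 0 := fun x => .zero le_rfl
  have hmove : ∀ {x y t}, (∀ r, Reach w d α C y r → Reach w d α C x (r + t)) →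
      ℓ y + t ≤ ℓ x := by
    intro x y t h
    have : ℓ y ≤ ℓ x - t := csSup_le ⟨0, hzero y⟩ fun r hr => by linarith [hle (h r hr)]
    linarith
  have hstep : ∀ {x y}, Adj w x y → α x y = C * d x y → ℓ y + α x y ≤ ℓ x := fun h e =>
    hmove fun r hr => .step h e (by simpa using hr)
  have hpos : ∀ {x y}, Adj w x y → α x y = C * d x y → 0 < α x y := fun h e =>
    e ▸ mul_pos hα.pos (hd.pos (hd.adj_ne h))
  have hattain : ∀ x, 0 < ℓ x → ∃ y, Adj w x y ∧ α x y = C * d x y ∧ ℓ x = ℓ y + α x y := by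
    intro x hx
    by_contra! hne
    have hev : ∀ᶠ s in 𝓝[<] (ℓ x), ∀ y, Adj w x y → α x y = C * d x y → ℓ y + α x y < s := by
      simp only [Filter.eventually_all]
      intro y hy e
      exact nhdsWithin_le_nhds (lt_mem_nhds ((hstep hy e).lt_of_ne (hne y hy e).symm))
    have hev' : ∀ᶠ s in 𝓝[<] (ℓ x), 0 < s := nhdsWithin_le_nhds (lt_mem_nhds hx)
    obtain ⟨s, ⟨h1, h2⟩, h3⟩ := ((hev.and hev').and self_mem_nhdsWithin).exists
    obtain ⟨t, ht, hst⟩ := exists_lt_of_lt_csSup ⟨0, hzero x⟩ h3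
    cases (Reach.mono ht hst.le) with
    | zero h => linarith
    | step h e hr => linarith [h1 _ h e, hle hr]
  -- `ℓ` is subharmonic: otherwise consider a bad vertex with `ℓ` as small as possible
  have hsub : ∀ x, 0 ≤ lap w μ ℓ x := by
    by_contra! hbad
    obtain ⟨x₁, hx₁⟩ := hbad
    obtain ⟨x, hx, hmin⟩ := Finset.exists_min_image (univ.filter fun x => lap w μ ℓ x < 0) ℓ
      ⟨x₁, by simpa using hx₁⟩
    simp only [mem_filter, mem_univ, true_and] at hx hmin
    rcases (hle (hzero x)).lt_or_eq with hlt | heq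
    · obtain ⟨y, hxy, e, hy⟩ := hattain x hlt
      have h := lap_le_of_tight hG hd hcurv hα hxy e
        (A := fun v => ℓ v + (0 + α x v)) (B := fun v => ℓ v + (α x y + α y v))
        (fun x' y' ht => by
          have := hmove ht
          rw [hα.mem.1 x' x] at this
          linarith)
        (by simp only [form_self hα.mem]; linarith)
      rw [lap_add ℓ fun v => α x y + α y v, lap_add ℓ fun v => 0 + α x v, lap_form hα.mem,
        lap_form hα.mem] at h
      have := hmin y (by linarith)
      linarith [hpos hxy e]
    · refine absurd hx (not_lt.2 (Finset.sum_nonneg fun u _ => ?_))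
      refine mul_nonneg (div_nonneg (hG.nonneg _ _) (hG.mu_pos _).le) ?_
      linarith [hle (hzero u)]
  have : Nonempty V := ⟨x₀⟩
  obtain ⟨z, hz⟩ := Finite.exists_max ℓ
  have hconst : ∀ y, ℓ y = ℓ z := by
    refine connected_induction hconn (P := fun y => ℓ y = ℓ z) (fun x y hxy hx => ?_) rfl
    by_contra hne
    have hlt : ℓ y < ℓ z := (hz y).lt_of_ne hne
    refine absurd (hsub x) (not_le.2 (Finset.sum_neg' (fun u _ => ?_) ⟨y, mem_univ y, ?_⟩))
    · refine mul_nonpos_of_nonneg_of_nonpos (div_nonneg (hG.nonneg _ _) (hG.mu_pos _).le) ?_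
      linarith [hz u]
    · exact mul_neg_of_pos_of_neg (div_pos hxy (hG.mu_pos x)) (by linarith)
  linarith [hstep h₀ hmax₀, hpos h₀ hmax₀, hconst x₀, hconst y₀]

/-- If the slope bound `C` is attained on some edge, then every vertex has an outgoing edge of
slope `C`. -/
lemma exists_max_edge (hG : IsWeightedGraph w μ) (hconn : GraphConnected w)
    (hd : IsGeoDist w d) (hcurv : NonnegCurv w μ d) (hα : IsSlope w μ d α C) {x₀ y₀ : V}
    (h₀ : Adj w x₀ y₀) (hmax₀ : α x₀ y₀ = C * d x₀ y₀) (x : V) :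
    ∃ y, Adj w x y ∧ α x y = C * d x y := by
  obtain ⟨z, hz⟩ := exists_forall_reach hG hconn hd hcurv hα h₀ hmax₀
  obtain ⟨m, hm⟩ := (Set.finite_range fun p : V × V => α p.1 p.2).bddAbove
  have hm' : ∀ u v, α u v ≤ m := fun u v => hm ⟨(u, v), rfl⟩
  have hall : ∀ s, Reach w d α C x s := by
    refine connected_induction hconn (P := fun x => ∀ s, Reach w d α C x s)
      (fun x y hxy hx s => ?_) hz x
    exact (Reach.neighbor hG hd hcurv hα hm' (hx (s + m - α y x)) hxy).mono (by linarith)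
  cases hall 1 with
  | zero h => linarith
  | step h e _ => exact ⟨_, h, e⟩

end Transport

/-! ### Symmetric convex bodies cut out by few half-spaces -/

section Linear

open Filter Topology

variable {E ι : Type*} [AddCommGroup E] [Module ℝ E]

/-- The indices in `S` suffice to compute the norm `max |ℓ j|`, without taking absolute values. -/
def Norming (ℓ : ι → Module.Dual ℝ E) (S : Finset ι) : Prop :=
  ∀ v : E, v ≠ 0 → ∃ i ∈ S, 0 < ℓ i v ∧ ∀ j, |ℓ j v| ≤ ℓ i v

/-- In a minimal norming set the functionals come in pairs `± ℓ i`: near a point where `ℓ i` is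
strictly maximal the norm is linear, hence so is the norm near the opposite point. -/
lemma Norming.exists_neg (ℓ : ι → Module.Dual ℝ E) {S : Finset ι} (hS : Norming ℓ S)
    (hmin : ∀ T, T ⊂ S → ¬ Norming ℓ T) {i : ι} (hi : i ∈ S) : ∃ j ∈ S, ℓ j = - ℓ i := by
  classical
  have hnot := hmin _ (Finset.erase_ssubset hi)
  unfold Norming at hnot
  push Not at hnot
  obtain ⟨v, hv, hv'⟩ := hnot
  have huniq : ∀ u : E, u ≠ 0 → (∀ j ∈ S.erase i, ℓ j u < ℓ i u) → ∀ j, |ℓ j u| ≤ ℓ i u := by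
    intro u hu hlt
    obtain ⟨k, hk, _, hk'⟩ := hS u hu
    by_cases hki : k = i
    · exact hki ▸ hk'
    · have h1 := hlt k (Finset.mem_erase.2 ⟨hki, hk⟩)
      have h2 := hk' i
      linarith [le_abs_self (ℓ i u)]
  obtain ⟨k, hk, hkpos, hkmax⟩ := hS v hv
  have hki : k = i := by
    by_contra hne
    obtain ⟨j, hj⟩ := hv' k (Finset.mem_erase.2 ⟨hne, hk⟩) hkpos
    exact absurd (hkmax j) (not_le.2 hj)
  subst hki
  have hlt : ∀ j ∈ S.erase k, ℓ j v < ℓ k v := by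
    intro j hj
    by_contra hge
    have e : ℓ j v = ℓ k v := le_antisymm ((le_abs_self _).trans (hkmax j)) (not_lt.1 hge)
    obtain ⟨l, hl⟩ := hv' j hj (by rw [e]; exact hkpos)
    rw [e] at hl
    exact absurd (hkmax l) (not_le.2 hl)
  obtain ⟨j, hj, _, hjmax⟩ := hS (-v) (neg_ne_zero.2 hv)
  have hjv : ℓ j v = - ℓ k v := by
    have h1 := hjmax k
    have h2 := hkmax j
    simp only [map_neg, abs_neg] at h1
    linarith [le_abs_self (ℓ k v), neg_abs_le (ℓ j v)]
  refine ⟨j, hj, LinearMap.ext fun h => ?_⟩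
  -- `ℓ j + ℓ k` is nonnegative near `v` and vanishes at `v`
  have hcont : ∀ m : ι, ∀ s : ℝ, Tendsto (fun t : ℝ => ℓ m (v + (s * t) • h)) (𝓝[>] 0)
      (𝓝 (ℓ m v)) := by
    intro m s
    have : Continuous fun t : ℝ => ℓ m v + (s * t) * ℓ m h := by fun_prop
    have := (this.tendsto 0).mono_left (nhdsWithin_le_nhds (s := Set.Ioi 0))
    simpa using this
  have key : ∀ s : ℝ, 0 ≤ s * (ℓ j h + ℓ k h) := by
    intro s
    have h1 : ∀ᶠ t in 𝓝[>] (0 : ℝ), ∀ m ∈ S.erase k,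
        ℓ m (v + (s * t) • h) < ℓ k (v + (s * t) • h) := by
      rw [Filter.eventually_all_finset]
      exact fun m hm => (hcont m s).eventually_lt (hcont k s) (hlt m hm)
    have h2 : ∀ᶠ t in 𝓝[>] (0 : ℝ), 0 < ℓ k (v + (s * t) • h) :=
      (hcont k s).eventually_const_lt hkpos
    obtain ⟨t, ⟨h1, h2⟩, ht⟩ := ((h1.and h2).and self_mem_nhdsWithin).exists
    have hne : v + (s * t) • h ≠ 0 := fun e => by simp [e] at h2
    have h3 := (neg_abs_le _).trans' (neg_le_neg (huniq _ hne h1 j))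
    simp only [map_add, map_smul, smul_eq_mul] at h3
    have h4 : 0 ≤ (s * (ℓ j h + ℓ k h)) * t := by rw [hjv] at h3; linarith
    exact nonneg_of_mul_nonneg_left h4 ht
  have k1 := key 1
  have k2 := key (-1)
  rw [LinearMap.neg_apply]
  linarith

/-- A symmetric convex body of dimension `n` cut out by `|ι|` half-spaces `ℓ i ≤ 1` satisfies
`2 n ≤ |ι|`: the functionals of a minimal norming set span the dual space, so they contain a basis
and, by `Norming.exists_neg`, also its negatives. -/
lemma two_mul_finrank_le [Finite ι] [FiniteDimensional ℝ E] (ℓ : ι → Module.Dual ℝ E)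
    (h : ∀ v : E, v ≠ 0 → ∃ i, 0 < ℓ i v ∧ ∀ j, |ℓ j v| ≤ ℓ i v) :
    2 * Module.finrank ℝ E ≤ Nat.card ι := by
  classical
  have := Fintype.ofFinite ι
  obtain ⟨S, hS, hmin⟩ : ∃ S : Finset ι, Norming ℓ S ∧ ∀ T, T ⊂ S → ¬ Norming ℓ T := by
    have huniv : Norming ℓ Finset.univ := fun v hv => by simpa using h v hv
    obtain ⟨S, hS, hmin⟩ := WellFounded.has_min (wellFounded_lt (α := Finset ι))
      {S | Norming ℓ S} ⟨_, huniv⟩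
    exact ⟨S, hS, fun T hT hT' => hmin T hT' hT⟩
  have hneg : ∀ i : S, ∃ j : ι, ℓ j = - ℓ i := fun i => by
    obtain ⟨j, _, hj⟩ := hS.exists_neg ℓ hmin i.2
    exact ⟨j, hj⟩
  choose σ hσ using hneg
  obtain ⟨κ, a, ha, hspan, hli⟩ := exists_linearIndependent' ℝ (fun i : S => ℓ i)
  have : Finite κ := Finite.of_injective a ha
  have := Fintype.ofFinite κ
  have hdim : Module.finrank ℝ E ≤ Fintype.card κ := by
    have hinj : Function.Injective (LinearMap.pi fun k : κ => ℓ (a k)) := by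
      rw [injective_iff_map_eq_zero]
      intro v hv
      by_contra hv0
      obtain ⟨i, hi, hpos, _⟩ := hS v hv0
      have hle : Submodule.span ℝ (Set.range ((fun i : S => ℓ i) ∘ a)) ≤
          LinearMap.ker (Module.Dual.eval ℝ E v) := by
        rw [Submodule.span_le]
        rintro _ ⟨k, rfl⟩
        exact congrFun hv k
      rw [hspan] at hle
      have : ℓ i v = 0 := hle (Submodule.subset_span ⟨⟨i, hi⟩, rfl⟩)
      exact hpos.ne' this
    simpa using LinearMap.finrank_le_finrank_of_injective hinj
  have hinj : Function.Injective (Sum.elim (fun k => (a k : ι)) fun k => σ (a k)) := by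
    have hcross : ∀ k l, ℓ (a k) ≠ - ℓ (a l) := by
      intro k l e
      by_cases hkl : k = l
      · subst hkl
        refine hli.ne_zero k (LinearMap.ext fun v => ?_)
        have := LinearMap.congr_fun e v
        simp only [LinearMap.neg_apply] at this
        simp only [Function.comp_apply, LinearMap.zero_apply]
        linarith
      · have := linearIndependent_iff'.1 hli {k, l} (fun _ => 1)
          (by rw [Finset.sum_pair hkl]; simp [e]) k (by simp)
        exact one_ne_zero this
    rintro (k | k) (l | l) e
    · exact congrArg _ (ha (Subtype.ext e))
    · exact absurd ((congrArg ℓ e).trans (hσ _)) (hcross k l)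
    · exact absurd ((congrArg ℓ e).symm.trans (hσ _)) (hcross l k)
    · have e' := congrArg ℓ e
      simp only [Sum.elim_inr, hσ, neg_inj] at e'
      exact congrArg _ (hli.injective e')
  have := Fintype.card_le_of_injective _ hinj
  rw [Fintype.card_sum] at this
  rw [Nat.card_eq_fintype_card]
  omega

end Linear

/-! ### The Betti number estimate -/

section Betti

variable {V : Type*} [Fintype V] {w d : V → V → ℝ} {μ : V → ℝ}

/-- The harmonic forms as a subspace. -/
def H1 (w : V → V → ℝ) (μ : V → ℝ) (d : V → V → ℝ) : Submodule ℝ (V → V → ℝ) where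
  carrier := H1set w μ d
  zero_mem' := ⟨by simp, by simp, by simp, by simp⟩
  add_mem' := by
    rintro α β ⟨a1, a2, a3, a4⟩ ⟨b1, b2, b3, b4⟩
    refine ⟨fun x y => ?_, fun x y h => ?_, fun n c hc hX => ?_, fun x => ?_⟩
    · simp only [Pi.add_apply, a1 x y, b1 x y]; ring
    · simp [a2 x y h, b2 x y h]
    · simp only [Pi.add_apply, Finset.sum_add_distrib, a3 n c hc hX, b3 n c hc hX, add_zero]
    · simp only [Pi.add_apply, mul_add, Finset.sum_add_distrib, a4, b4, add_zero]
  smul_mem' := by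
    rintro r α ⟨a1, a2, a3, a4⟩
    refine ⟨fun x y => ?_, fun x y h => ?_, fun n c hc hX => ?_, fun x => ?_⟩
    · simp only [Pi.smul_apply, smul_eq_mul, a1 x y]; ring
    · simp [a2 x y h]
    · simp only [Pi.smul_apply, smul_eq_mul, ← Finset.mul_sum, a3 n c hc hX, mul_zero]
    · simp only [Pi.smul_apply, smul_eq_mul, mul_left_comm _ r, ← Finset.mul_sum, a4, mul_zero]

lemma betti1_eq : betti1 w μ d = Module.finrank ℝ (H1 w μ d) := by
  unfold betti1
  rw [show H1set w μ d = (H1 w μ d : Set (V → V → ℝ)) from rfl, Submodule.span_eq]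

lemma two_mul_betti1_le (hG : IsWeightedGraph w μ) (hconn : GraphConnected w)
    (hd : IsGeoDist w d) (hcurv : NonnegCurv w μ d) (x : V) :
    2 * betti1 w μ d ≤ deg w x := by
  rw [betti1_eq]
  let ℓ : {y : V // Adj w x y} → Module.Dual ℝ (H1 w μ d) := fun y =>
    (d x y)⁻¹ • ((LinearMap.proj (y : V) : (V → ℝ) →ₗ[ℝ] ℝ) ∘ₗ
      (LinearMap.proj x : (V → V → ℝ) →ₗ[ℝ] (V → ℝ)) ∘ₗ (H1 w μ d).subtype)
  have hℓ : ∀ y (α : H1 w μ d), ℓ y α = (d x y)⁻¹ * (α : V → V → ℝ) x y := fun y α => rfl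
  refine two_mul_finrank_le ℓ ?_
  rintro ⟨α, hmem⟩ hne
  have hα : α ∈ H1set w μ d := hmem
  have : Nonempty V := ⟨x⟩
  obtain ⟨⟨x₀, y₀⟩, hmax⟩ := Finite.exists_max fun p : V × V => α p.1 p.2 / d p.1 p.2
  set C := α x₀ y₀ / d x₀ y₀ with hC
  have hmax : ∀ u v, α u v / d u v ≤ C := fun u v => hmax (u, v)
  have hle : ∀ u v, Adj w u v → α u v ≤ C * d u v := fun u v h =>
    (div_le_iff₀ (hd.pos (hd.adj_ne h))).1 (hmax u v)
  have hpos : 0 < C := by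
    by_contra hneg
    have hnonpos : ∀ u v, α u v ≤ 0 := by
      intro u v
      by_cases h : Adj w u v
      · exact (hle u v h).trans (mul_nonpos_of_nonpos_of_nonneg (not_lt.1 hneg) (hd.nonneg _ _))
      · exact (hα.2.1 u v h).le
    refine hne (Subtype.ext (funext fun u => funext fun v => ?_))
    have h1 := hnonpos u v
    have h2 := hnonpos v u
    rw [hα.1 v u] at h2
    exact le_antisymm h1 (neg_nonpos.1 h2)
  have h₀ : Adj w x₀ y₀ := by
    by_contra h
    rw [hC, hα.2.1 _ _ h, zero_div] at hpos
    exact lt_irrefl _ hpos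
  have hmax₀ : α x₀ y₀ = C * d x₀ y₀ := by
    rw [hC, div_mul_cancel₀ _ (hd.pos (hd.adj_ne h₀)).ne']
  obtain ⟨y, hxy, hy⟩ := exists_max_edge hG hconn hd hcurv ⟨hα, hpos, hle⟩ h₀ hmax₀ x
  have hval : ℓ ⟨y, hxy⟩ ⟨α, hmem⟩ = C := by
    have := (hd.pos (hd.adj_ne hxy)).ne'
    rw [hℓ]
    simp only [hy]
    field_simp
  refine ⟨⟨y, hxy⟩, hval ▸ hpos, ?_⟩
  rintro ⟨z, hz⟩
  rw [hval, hℓ, mul_comm, ← div_eq_mul_inv, abs_le]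
  refine ⟨?_, hmax x z⟩
  have := hmax z x
  rw [hα.1 z x, hd.symm z x, neg_div] at this
  simp only
  linarith

end Betti

end Paper

open Paper in
/-- **Theorem (Betti number estimate for non-negative Ollivier curvature).**
Let `G = (V, w, μ)` be a finite connected weighted graph with a general path distance `d` and
non-negative Ollivier curvature. Then `β₁(M₂(G)) ≤ deg_min / 2`. -/
theorem betti_le_half_degMin_of_nonneg_curvature
    {V : Type*} [Fintype V] [Nonempty V] (w : V → V → ℝ) (μ : V → ℝ) (d : V → V → ℝ)
    (hG : IsWeightedGraph w μ) (hconn : GraphConnected w) (hd : IsPathDistance w d)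
    (hcurv : NonnegCurv w μ d) :
    (betti1 w μ d : ℝ) ≤ (degMin w : ℝ) / 2 := by
  have hgeo := isGeoDist_of_isPathDistance hG hd
  obtain ⟨x, hx⟩ : ∃ x, deg w x = degMin w := Nat.sInf_mem (Set.range_nonempty (deg w))
  have h := two_mul_betti1_le hG hconn hgeo hcurv x
  rw [hx] at h
  have h' : (2 : ℝ) * betti1 w μ d ≤ degMin w := by exact_mod_cast h
  linarith
end
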